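/- arXiv:2602.08176 — 3 statements merged into one kernel-verified Lean document; each statement's English description precedes it below -/
import Mathlib

section
/- For every w ∈ 𝔥¹ one has δ(φ(w)) − φ(δ(w)) = W(w), i.e. the commutator [δ, φ] equals the weight operator W on 𝔥¹. -/
/-!
Transported to words in `x, y`, every operator involved is described by how it interacts with
left multiplication `X, Y` by a letter and with left deletion `∂x, ∂y` of a letter. The harmonic
product with `z₂` becomes `A = XY + Ad`, where `Ad` is the derivation with `x ↦ 0`,
`y ↦ yxy + xxy`; the shuffle products `S` with `y` and `P` with `xy` satisfy `PX = XP + XSX`,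
`PY = YP + XSY`; the interior part `T = (yyx → y) - (xyy → y)` of `2δ` satisfies
`TX = XT - Y∂y²` and `TY = YT + Y∂x∂y`; the boundary part is
`β = ½∂x∂y - ½∂y∂x + ¼∂y²`.

Induction on the word gives three commutators: `[T, S] = -2∂x` on words not ending in `x`
(`T_S`), hence `[T, P] = -2·length` on these words (`T_P`), and `[T, Ad] = -XY∂y²` (`T_A`).
The first one is the only place where the last letter matters. The commutators `[β, P] = -½`,
`[β, Ad]` and `[T, XY]` are immediate from the rules above, and in `½[T, A - P] + [β, A - P]`
everything cancels except the length (`comm_B`). The length of a word in `x, y` is the weight of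
the corresponding word in the `z_k`. The remaining lemmas show that `φ` and `δ` on `𝔥¹` are the
transports of the operators `A - P` and `½T + β` along `z_k = x^{k-1}y`.
-/

open scoped Classical BigOperators

noncomputable section

/-- The underlying space of `𝔥¹ = ℚ⟨z₁, z₂, …⟩`: formal ℚ-linear combinations of words,
a word being encoded by the list of subscripts `[k₁, …, k_r]` of `z_{k₁} ⋯ z_{k_r}`. -/
abbrev H : Type := List ℕ →₀ ℚ

/-- The space of ℚ-linear combinations of words in the two letters `x` (= `false`)
and `y` (= `true`). -/
abbrev Bw : Type := List Bool →₀ ℚ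

/-- The word `z_{k₁} ⋯ z_{k_r}` as an element of `H`. -/
def zw (l : List ℕ) : H := Finsupp.single l 1

/-- Membership in `𝔥¹` (all subscripts ≥ 1). -/
def isH1 (w : H) : Prop := ∀ l ∈ w.support, ∀ k ∈ l, 1 ≤ k

/-- Membership in `𝔥^{≥2}` (all subscripts ≥ 2). -/
def isH2 (w : H) : Prop := ∀ l ∈ w.support, ∀ k ∈ l, 2 ≤ k

/-- Membership in `𝔥⁰` (first subscript ≥ 2, all others ≥ 1). -/
def isH0 (w : H) : Prop :=
  ∀ l ∈ w.support, (∀ k ∈ l, 1 ≤ k) ∧ ∀ k, l.head? = some k → 2 ≤ k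

/-- The harmonic product on words. -/
def hmulW : List ℕ → List ℕ → H
  | [], v => Finsupp.single v 1
  | k :: u, [] => Finsupp.single (k :: u) 1
  | k :: u, l :: v =>
      Finsupp.mapDomain (k :: ·) (hmulW u (l :: v)) +
      Finsupp.mapDomain (l :: ·) (hmulW (k :: u) v) +
      Finsupp.mapDomain ((k + l) :: ·) (hmulW u v)
  termination_by u v => u.length + v.length

/-- The harmonic product `*` on `𝔥¹`. -/
def hmul (u v : H) : H := u.sum fun a ca => v.sum fun b cb => (ca * cb) • hmulW a b

/-- The shuffle product on words in the letters `x, y`. -/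
def shW : List Bool → List Bool → Bw
  | [], v => Finsupp.single v 1
  | a :: u, [] => Finsupp.single (a :: u) 1
  | a :: u, b :: v =>
      Finsupp.mapDomain (a :: ·) (shW u (b :: v)) +
      Finsupp.mapDomain (b :: ·) (shW (a :: u) v)
  termination_by u v => u.length + v.length

/-- The identification `z_k = x^{k-1} y`. -/
def toXY (l : List ℕ) : List Bool :=
  (l.map fun k => List.replicate (k - 1) false ++ [true]).flatten

def fromXYAux : List Bool → ℕ → List ℕ
  | [], _ => []
  | false :: t, c => fromXYAux t (c + 1)
  | true :: t, c => (c + 1) :: fromXYAux t 0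

/-- Parse a word in `x, y` (ending in `y`) back into a word `z_{k₁} ⋯ z_{k_r}`. -/
def fromXY (l : List Bool) : List ℕ := fromXYAux l 0

def shmulW (a b : List ℕ) : H := Finsupp.mapDomain fromXY (shW (toXY a) (toXY b))

/-- The shuffle product `⧢` on `𝔥¹` (via the identification `z_k = x^{k-1}y`). -/
def shmul (u v : H) : H := u.sum fun a ca => v.sum fun b cb => (ca * cb) • shmulW a b

/-- `φ(w) = w * z₂ − w ⧢ z₂`. -/
def phi (w : H) : H := hmul w (zw [2]) - shmul w (zw [2])

/-- `R(u,v) = φ(u*v) − φ(u)*v − u*φ(v)`. -/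
def Rop (u v : H) : H := phi (hmul u v) - hmul (phi u) v - hmul u (phi v)

/-- The weight operator `W`. -/
def Wop (w : H) : H := w.sum fun a c => Finsupp.single a (c * (a.sum : ℚ))

/-- `Σ_{w = u'(p)u''} u' y u''`: replace one occurrence of the factor `p` by `y`. -/
def replaceOcc (p : List Bool) : List Bool → Bw
  | [] => 0
  | a :: t =>
      (if p.isPrefixOf (a :: t) then Finsupp.single (true :: (a :: t).drop p.length) 1 else 0) +
      Finsupp.mapDomain (a :: ·) (replaceOcc p t)

/-- The map `δ` on words in the letters `x, y`. -/
def deltaB (l : List Bool) : Bw :=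
  (if l.take 2 = [true, false] then (1/2 : ℚ) • Finsupp.single (l.drop 2) 1 else 0) -
  (if l.take 2 = [false, true] then (1/2 : ℚ) • Finsupp.single (l.drop 2) 1 else 0) +
  (if l.take 2 = [true, true] then (1/4 : ℚ) • Finsupp.single (l.drop 2) 1 else 0) +
  (1/2 : ℚ) • (replaceOcc [true, true, false] l - replaceOcc [false, true, true] l)

/-- The map `δ : 𝔥¹ → 𝔥¹`. -/
def deltaH (w : H) : H := w.sum fun a c => c • Finsupp.mapDomain fromXY (deltaB (toXY a))

/-- The recursively defined map `𝔇` on tuples, with an explicit fuel parameter.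
(The fuel `c.sum + 1` is always sufficient, since the total sum of the entries strictly
decreases in each recursive call.) -/
def Dfuel : ℕ → List ℕ → Bw
  | _, [] => Finsupp.single [] 1
  | 0, _ :: _ => 0
  | fuel + 1, k :: t =>
      let c := k :: t
      let n := c.length
      let ones : Finset ℕ := (Finset.Icc 1 n).filter fun i => c.getD (i - 1) 0 = 1
      let bigs : Finset ℕ := (Finset.Icc 1 n).filter fun i => 1 < c.getD (i - 1) 0
      let evenOdd : Finset ℕ → Prop := fun A =>
        ∀ i ∈ A, (Even i → i + 1 ∈ A) ∧ (Odd i → i - 1 ∈ A)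
      let oddEven : Finset ℕ → Prop := fun A =>
        ∀ i ∈ A, (Odd i → i + 1 ∈ A) ∧ (Even i → i - 1 ∈ A)
      let noEvenPair : Finset ℕ → Prop := fun B' =>
        ∀ l : ℕ, 1 ≤ l → ¬(2 * l ∈ B' ∧ 2 * l + 1 ∈ B')
      let noOddPair : Finset ℕ → Prop := fun B' =>
        ∀ l : ℕ, 1 ≤ l → ¬(2 * l - 1 ∈ B' ∧ 2 * l ∈ B')
      let newc : Finset ℕ → Finset ℕ → List ℕ := fun A B' =>
        (List.range n).filterMap fun j =>
          if j + 1 ∈ A then none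
          else some (c.getD j 0 - if j + 1 ∈ B' then 1 else 0)
      (∑ A ∈ ones.powerset.filter evenOdd,
        ∑ B' ∈ bigs.powerset.filter (fun B' => 1 ≤ A.card + B'.card ∧ noEvenPair B'),
          ((-1 : ℚ) ^ (B'.card + 1)) •
            Finsupp.mapDomain (fun w => List.replicate (A.card + B'.card) false ++ w)
              (Dfuel fuel (newc A B'))) +
      (∑ A ∈ ones.powerset.filter evenOdd,
        ∑ B' ∈ bigs.powerset.filter (fun B' => 2 ≤ A.card + B'.card ∧ noEvenPair B'),
          ((-1 : ℚ) ^ (B'.card + 1)) •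
            Finsupp.mapDomain
              (fun w => List.replicate (A.card + B'.card - 1) false ++ true :: w)
              (Dfuel fuel (newc A B'))) +
      (∑ A ∈ ones.powerset.filter oddEven,
        ∑ B' ∈ bigs.powerset.filter (fun B' => 2 ≤ A.card + B'.card ∧ noOddPair B'),
          ((-1 : ℚ) ^ B'.card) •
            Finsupp.mapDomain
              (fun w => List.replicate (A.card + B'.card - 1) false ++ true :: w)
              (Dfuel fuel (newc A B')))

/-- The map `𝔇` on tuples of positive integers. -/
def DropD (c : List ℕ) : Bw := Dfuel (c.sum + 1) c

/-- Run-length encoding of a word in `x, y`: the exponents `(c₁, …, c_{2s})` of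
`x^{c₁} y^{c₂} ⋯ x^{c_{2s-1}} y^{c_{2s}}`. -/
def rle : List Bool → List ℕ
  | [] => []
  | a :: t => ((t.takeWhile (· = a)).length + 1) :: rle (t.dropWhile (· = a))
  termination_by l => l.length
  decreasing_by
    simp only [List.length_cons]
    exact Nat.lt_succ_of_le (List.Sublist.length_le (List.dropWhile_sublist _))

def Drop1W (a : List ℕ) : H := Finsupp.mapDomain fromXY (DropD (rle (toXY a)))

/-- The Drop1 operator `𝒟 : 𝔥⁰ → 𝔥^{≥2}` of Hirose–Maesaka–Seki–Watanabe. -/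
def Drop1 (w : H) : H := w.sum fun a c => c • Drop1W a

/-- The map `der = −𝒟 ∘ φ`, i.e. `der(w) = 𝒟(w ⧢ z₂ − w * z₂)`. -/
def der (w : H) : H := Drop1 (shmul w (zw [2]) - hmul w (zw [2]))

/-- The ideal `DR_*` of `(𝔥^{≥2}, *)` spanned by the `der^n(R(u,v)) * w`. -/
def DRstar : Submodule ℚ H :=
  Submodule.span ℚ {x | ∃ (n : ℕ) (u v w : H), isH2 u ∧ isH2 v ∧ isH2 w ∧
    x = hmul (der^[n] (Rop u v)) w}

/-- The lexicographic order `≻` on the lattice `ℤτ + ℤ`. -/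
def lexGT (a b : ℤ × ℤ) : Prop := b.1 < a.1 ∨ (a.1 = b.1 ∧ b.2 < a.2)

/-- The lattice point `mτ + n`. -/
def lat (τ : ℂ) (p : ℤ × ℤ) : ℂ := p.1 * τ + p.2

/-- The finite partial sum `S_{M,N}(k₁,…,k_r; τ)` of the multiple Eisenstein series. -/
def SMN (k : List ℕ) (M N : ℕ) (τ : ℂ) : ℂ :=
  ∑ f ∈ (Fintype.piFinset fun _ : Fin k.length =>
      (Finset.Ioo (-(M : ℤ)) (M : ℤ)) ×ˢ (Finset.Ioo (-(N : ℤ)) (N : ℤ))).filter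
      (fun f => ∀ i : Fin k.length,
        lexGT (f i) (if h : (i : ℕ) + 1 < k.length then f ⟨(i : ℕ) + 1, h⟩ else (0, 0))),
    ∏ i : Fin k.length, (lat τ (f i)) ^ (-(k.get i : ℤ))

/-- The finite partial sums of the `g`-part: only lattice points with positive
imaginary part. -/
def gSMN (k : List ℕ) (M N : ℕ) (τ : ℂ) : ℂ :=
  ∑ f ∈ (Fintype.piFinset fun _ : Fin k.length =>
      (Finset.Ioo (-(M : ℤ)) (M : ℤ)) ×ˢ (Finset.Ioo (-(N : ℤ)) (N : ℤ))).filter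
      (fun f => (∀ i : Fin k.length,
        lexGT (f i) (if h : (i : ℕ) + 1 < k.length then f ⟨(i : ℕ) + 1, h⟩ else (0, 0))) ∧
        ∀ i : Fin k.length, 0 < (lat τ (f i)).im),
    ∏ i : Fin k.length, (lat τ (f i)) ^ (-(k.get i : ℤ))

/-- The multiple zeta value `ζ(k₁,…,k_r)` as an (unconditional) sum. -/
def zetaValue (k : List ℕ) : ℂ :=
  ∑' n : Fin k.length → ℕ,
    if ∀ i : Fin k.length,
        (if h : (i : ℕ) + 1 < k.length then n ⟨(i : ℕ) + 1, h⟩ else 0) < n i then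
      ∏ i : Fin k.length, (n i : ℂ) ^ (-(k.get i : ℤ))
    else 0

section Quasi

variable {R : Type*} [CommRing R] [Algebra ℚ R]

/-- `F_w(M) = Σ_{w = w₁⋯w_s} Σ_{M > m₁ > ⋯ > m_s > 0} f_{w₁}(m₁)⋯f_{w_s}(m_s)` on words. -/
def Fword (f : ℕ → H →ₗ[ℚ] R) (M : ℕ) (l : List ℕ) : R :=
  if l = [] then 1
  else ∑ c : Composition l.length,
    ∑ m ∈ (Fintype.piFinset fun _ : Fin c.length => Finset.Ioo 0 M).filter
        (fun m => StrictAnti m),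
      ∏ i : Fin c.length, f (m i) (zw ((l.splitWrtComposition c).getD (i : ℕ) []))

/-- The ℚ-linear extension of `Fword`. -/
def FL (f : ℕ → H →ₗ[ℚ] R) (M : ℕ) (w : H) : R := w.sum fun l c => c • Fword f M l

/-- `μ^{m₁,…,m_r} = 1/(r₁!⋯r_s!)` where `r₁,…,r_s` are the multiplicities of the
distinct values of `m`. -/
def muCoeff {s : ℕ} (m : Fin s → ℕ) : ℚ :=
  (∏ v ∈ Finset.image m Finset.univ,
    ((Finset.univ.filter fun i => m i = v).card.factorial : ℚ))⁻¹

/-- `coF(M)` on words: supported on powers of `z₁`. -/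
def coFword (a : ℕ → R) (M : ℕ) (l : List ℕ) : R :=
  if ∀ k ∈ l, k = 1 then
    (-1 : R) ^ l.length *
      ∑ m ∈ (Fintype.piFinset fun _ : Fin l.length => Finset.Ioo 0 M).filter
          (fun m => Antitone m),
        muCoeff m • ∏ i : Fin l.length, a (m i)
  else 0

/-- The ℚ-linear extension of `coFword`. -/
def coFL (a : ℕ → R) (M : ℕ) (w : H) : R := w.sum fun l c => c • coFword a M l

/-- `F^*(M)`: the deconcatenation convolution of `coF(M)` and `F(M)` on words. -/
def FstarWord (f : ℕ → H →ₗ[ℚ] R) (M : ℕ) (l : List ℕ) : R :=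
  ∑ i ∈ Finset.range (l.length + 1),
    coFword (fun m => f m (zw [1])) M (l.take i) * Fword f M (l.drop i)

/-- The ℚ-linear extension of `FstarWord`. -/
def FstarL (f : ℕ → H →ₗ[ℚ] R) (M : ℕ) (w : H) : R := w.sum fun l c => c • FstarWord f M l

end Quasi

/-- Parse a word `b_{k₁}b₀^{m₁} ⋯ b_{k_r}b₀^{m_r}` (a list over ℕ, with `0` playing the
role of `b₀`) into the list of pairs `(k₁,m₁), …, (k_r,m_r)`. -/
def toPairs : List ℕ → List (ℕ × ℕ)
  | [] => []
  | k :: t => (k, (t.takeWhile (· = 0)).length) :: toPairs (t.dropWhile (· = 0))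
  termination_by l => l.length
  decreasing_by
    simp only [List.length_cons]
    exact Nat.lt_succ_of_le (List.Sublist.length_le (List.dropWhile_sublist _))

def ofPairs (P : List (ℕ × ℕ)) : List ℕ :=
  (P.map fun p => p.1 :: List.replicate p.2 0).flatten

/-- The involution `τ_b` on words of `ℚ⟨ℬ⟩⁰`. -/
def taubW (l : List ℕ) : List ℕ :=
  ofPairs (((toPairs l).map fun p => (p.2 + 1, p.1 - 1)).reverse)

/-- The ℚ-linear involution `τ_b` on `ℚ⟨ℬ⟩⁰`. -/
def taub (w : H) : H := w.sum fun a c => c • (Finsupp.single (taubW a) 1 : H)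

/-- The balanced harmonic product `*_b` on words of `ℚ⟨ℬ⟩⁰`. -/
def hbW : List ℕ → List ℕ → H
  | [], v => Finsupp.single v 1
  | i :: u, [] => Finsupp.single (i :: u) 1
  | i :: u, j :: v =>
      Finsupp.mapDomain (i :: ·) (hbW u (j :: v)) +
      Finsupp.mapDomain (j :: ·) (hbW (i :: u) v) +
      (if i ≠ 0 ∧ j ≠ 0 then Finsupp.mapDomain ((i + j) :: ·) (hbW u v) else 0)
  termination_by u v => u.length + v.length

/-- The balanced harmonic product `*_b`. -/
def hb (u v : H) : H := u.sum fun a ca => v.sum fun b cb => (ca * cb) • hbW a b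

/-- The derivation `D` of `ℚ⟨ℬ⟩⁰`:
`D(b_{k₁}b₀^{m₁}⋯b_{k_r}b₀^{m_r}) = Σ_{1≤i≤j≤r} k_i(m_j+1)·(word with k_i, m_j increased)`. -/
def Dbal (w : H) : H :=
  w.sum fun a c =>
    let P := toPairs a
    ∑ i ∈ Finset.range P.length, ∑ j ∈ Finset.Ico i P.length,
      (c * (P.getD i (0, 0)).1 * ((P.getD j (0, 0)).2 + 1)) •
        (Finsupp.single (ofPairs (P.mapIdx fun t p =>
          ((if t = i then p.1 + 1 else p.1), (if t = j then p.2 + 1 else p.2)))) 1 : H)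

namespace CommDeltaPhi

/-! ### Operators on words in `x, y` -/

/-- Linear extension of a map defined on words. -/
def lin {α M : Type*} [AddCommGroup M] [Module ℚ M] (f : α → M) : (α →₀ ℚ) →ₗ[ℚ] M :=
  Finsupp.linearCombination ℚ f

@[simp] lemma lin_single {α M : Type*} [AddCommGroup M] [Module ℚ M] (f : α → M) (a : α) :
    lin f (Finsupp.single a 1) = f a := by
  simp [lin]

lemma hom_ext {α M : Type*} [AddCommGroup M] [Module ℚ M] {f g : (α →₀ ℚ) →ₗ[ℚ] M}
    (h : ∀ a, f (Finsupp.single a 1) = g (Finsupp.single a 1)) (v : α →₀ ℚ) : f v = g v := by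
  have : f = g := by
    refine Finsupp.lhom_ext' fun a => LinearMap.ext_ring ?_
    simpa using h a
  rw [this]

/-- A word in `x, y` as a basis vector. -/
abbrev wd (l : List Bool) : Bw := Finsupp.single l 1

/-- Left multiplication by `x`. -/
def X : Bw →ₗ[ℚ] Bw := Finsupp.lmapDomain ℚ ℚ (false :: ·)

/-- Left multiplication by `y`. -/
def Y : Bw →ₗ[ℚ] Bw := Finsupp.lmapDomain ℚ ℚ (true :: ·)

/-- Deletion of a leading `x`; words not starting with `x` go to `0`. -/
def Dx : Bw →ₗ[ℚ] Bw := lin fun l => match l with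
  | false :: t => wd t
  | _ => 0

/-- Deletion of a leading `y`; words not starting with `y` go to `0`. -/
def Dy : Bw →ₗ[ℚ] Bw := lin fun l => match l with
  | true :: t => wd t
  | _ => 0

/-- Shuffle product with `y`. -/
def S : Bw →ₗ[ℚ] Bw := lin fun l => shW l [true]

/-- Shuffle product with `xy`. -/
def P : Bw →ₗ[ℚ] Bw := lin fun l => shW l [false, true]

/-- The derivation `x ↦ 0`, `y ↦ yxy + xxy`, on words. -/
def derW : List Bool → Bw
  | [] => 0
  | false :: t => X (derW t)
  | true :: t => Y (derW t) + wd (true :: false :: true :: t) + wd (false :: false :: true :: t)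

/-- The derivation `x ↦ 0`, `y ↦ yxy + xxy`, so that the harmonic product with `z₂` is
`v ↦ xyv + Ad v`. -/
def Ad : Bw →ₗ[ℚ] Bw := lin derW

/-- Twice the interior part of `δ`. -/
def T : Bw →ₗ[ℚ] Bw :=
  lin fun l => replaceOcc [true, true, false] l - replaceOcc [false, true, true] l

/-- Multiplication of each word by its length. -/
def Len : Bw →ₗ[ℚ] Bw := lin fun l => (l.length : ℚ) • wd l

/-- `φ` on words in `x, y`. -/
def phiB : Bw →ₗ[ℚ] Bw := X ∘ₗ Y + Ad - P

/-- `δ` on words in `x, y`. -/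
def delB : Bw →ₗ[ℚ] Bw := lin deltaB

lemma wd_false (l : List Bool) : wd (false :: l) = X (wd l) := by simp [X]
lemma wd_true (l : List Bool) : wd (true :: l) = Y (wd l) := by simp [Y]

@[simp] lemma Dx_nil : Dx (wd []) = 0 := by simp [Dx]
@[simp] lemma Dy_nil : Dy (wd []) = 0 := by simp [Dy]
@[simp] lemma S_nil : S (wd []) = Y (wd []) := by simp [S, shW, Y]
@[simp] lemma P_nil : P (wd []) = X (Y (wd [])) := by simp [P, shW, X, Y]
@[simp] lemma A_nil : Ad (wd []) = 0 := by simp [Ad, derW]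
@[simp] lemma T_nil : T (wd []) = 0 := by simp [T, replaceOcc]
@[simp] lemma Len_nil : Len (wd []) = 0 := by simp [Len]

@[simp] lemma Dx_X (v : Bw) : Dx (X v) = v :=
  hom_ext (f := Dx ∘ₗ X) (g := LinearMap.id) (fun l => by simp [Dx, X]) v
@[simp] lemma Dx_Y (v : Bw) : Dx (Y v) = 0 :=
  hom_ext (f := Dx ∘ₗ Y) (g := 0) (fun l => by simp [Dx, Y]) v
@[simp] lemma Dy_X (v : Bw) : Dy (X v) = 0 :=
  hom_ext (f := Dy ∘ₗ X) (g := 0) (fun l => by simp [Dy, X]) v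
@[simp] lemma Dy_Y (v : Bw) : Dy (Y v) = v :=
  hom_ext (f := Dy ∘ₗ Y) (g := LinearMap.id) (fun l => by simp [Dy, Y]) v

@[simp] lemma S_X (v : Bw) : S (X v) = X (S v) + Y (X v) :=
  hom_ext (f := S ∘ₗ X) (g := X ∘ₗ S + Y ∘ₗ X) (fun l => by simp [S, X, Y, shW]) v
@[simp] lemma S_Y (v : Bw) : S (Y v) = Y (S v) + Y (Y v) :=
  hom_ext (f := S ∘ₗ Y) (g := Y ∘ₗ S + Y ∘ₗ Y) (fun l => by simp [S, Y, shW]) v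

lemma P_X (v : Bw) : P (X v) = X (P v) + X (S (X v)) :=
  hom_ext (f := P ∘ₗ X) (g := X ∘ₗ P + X ∘ₗ S ∘ₗ X) (fun l => by simp [P, S, X, shW]) v
lemma P_Y (v : Bw) : P (Y v) = Y (P v) + X (S (Y v)) :=
  hom_ext (f := P ∘ₗ Y) (g := Y ∘ₗ P + X ∘ₗ S ∘ₗ Y) (fun l => by simp [P, S, X, Y, shW]) v

@[simp] lemma A_X (v : Bw) : Ad (X v) = X (Ad v) :=
  hom_ext (f := Ad ∘ₗ X) (g := X ∘ₗ Ad) (fun l => by simp [Ad, X, derW]) v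
@[simp] lemma A_Y (v : Bw) : Ad (Y v) = Y (Ad v) + Y (X (Y v)) + X (X (Y v)) :=
  hom_ext (f := Ad ∘ₗ Y) (g := Y ∘ₗ Ad + Y ∘ₗ X ∘ₗ Y + X ∘ₗ X ∘ₗ Y)
    (fun l => by simp [Ad, X, Y, derW]) v

@[simp] lemma Len_X (v : Bw) : Len (X v) = X (Len v) + X v :=
  hom_ext (f := Len ∘ₗ X) (g := X ∘ₗ Len + X) (fun l => by simp [Len, X]) v
@[simp] lemma Len_Y (v : Bw) : Len (Y v) = Y (Len v) + Y v :=
  hom_ext (f := Len ∘ₗ Y) (g := Y ∘ₗ Len + Y) (fun l => by simp [Len, Y]) v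

lemma T_cons_false (l : List Bool) : T (wd (false :: l)) =
    X (T (wd l)) - if [true, true].isPrefixOf l then Y (wd (l.drop 2)) else 0 := by
  simp only [T, lin_single, replaceOcc, map_sub, X, Y, Finsupp.lmapDomain_apply,
    Finsupp.mapDomain_single]
  simp [List.isPrefixOf]
  abel

lemma T_cons_true (l : List Bool) : T (wd (true :: l)) =
    Y (T (wd l)) + if [true, false].isPrefixOf l then Y (wd (l.drop 2)) else 0 := by
  simp only [T, lin_single, replaceOcc, map_sub, Y, Finsupp.lmapDomain_apply,
    Finsupp.mapDomain_single]
  simp [List.isPrefixOf]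
  abel

@[simp] lemma T_X (v : Bw) : T (X v) = X (T v) - Y (Dy (Dy v)) :=
  hom_ext (f := T ∘ₗ X) (g := X ∘ₗ T - Y ∘ₗ Dy ∘ₗ Dy) (fun l => by
    simp only [LinearMap.comp_apply, LinearMap.sub_apply]
    rw [← wd_false, T_cons_false]
    rcases l with _ | ⟨_ | _, _ | ⟨_ | _, l⟩⟩ <;> simp [Dy, List.isPrefixOf]) v
@[simp] lemma T_Y (v : Bw) : T (Y v) = Y (T v) + Y (Dx (Dy v)) :=
  hom_ext (f := T ∘ₗ Y) (g := Y ∘ₗ T + Y ∘ₗ Dx ∘ₗ Dy) (fun l => by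
    simp only [LinearMap.comp_apply, LinearMap.add_apply]
    rw [← wd_true, T_cons_true]
    rcases l with _ | ⟨_ | _, _ | ⟨_ | _, l⟩⟩ <;> simp [Dx, Dy, List.isPrefixOf]) v

/-- Linear maps agreeing on the empty word and on all `X v`, `Y v` are equal. -/
lemma hom_ext_cons {f g : Bw →ₗ[ℚ] Bw} (h0 : f (wd []) = g (wd []))
    (hX : ∀ v, f (X v) = g (X v)) (hY : ∀ v, f (Y v) = g (Y v)) (v : Bw) : f v = g v := by
  refine hom_ext (fun l => ?_) v
  rcases l with _ | ⟨_ | _, l⟩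
  · exact h0
  · have := hX (wd l)
    rwa [← wd_false] at this
  · have := hY (wd l)
    rwa [← wd_true] at this

@[simp] lemma Dx_S (v : Bw) : Dx (S v) = S (Dx v) :=
  hom_ext_cons (f := Dx ∘ₗ S) (g := S ∘ₗ Dx) (by simp) (by simp) (by simp) v
@[simp] lemma Dy_S (v : Bw) : Dy (S v) = v + S (Dy v) :=
  hom_ext_cons (f := Dy ∘ₗ S) (g := LinearMap.id + S ∘ₗ Dy) (by simp) (by simp)
    (by simp [add_comm]) v
@[simp] lemma Dx_P (v : Bw) : Dx (P v) = P (Dx v) + S v :=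
  hom_ext_cons (f := Dx ∘ₗ P) (g := P ∘ₗ Dx + S) (by simp) (by simp [P_X]) (by simp [P_Y]) v
@[simp] lemma Dy_P (v : Bw) : Dy (P v) = P (Dy v) :=
  hom_ext_cons (f := Dy ∘ₗ P) (g := P ∘ₗ Dy) (by simp) (by simp [P_X]) (by simp [P_Y]) v
@[simp] lemma Dx_A (v : Bw) : Dx (Ad v) = Ad (Dx v) + X (Y (Dy v)) :=
  hom_ext_cons (f := Dx ∘ₗ Ad) (g := Ad ∘ₗ Dx + X ∘ₗ Y ∘ₗ Dy) (by simp) (by simp) (by simp) v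
@[simp] lemma Dy_A (v : Bw) : Dy (Ad v) = Ad (Dy v) + X (Y (Dy v)) :=
  hom_ext_cons (f := Dy ∘ₗ Ad) (g := Ad ∘ₗ Dy + X ∘ₗ Y ∘ₗ Dy) (by simp) (by simp) (by simp) v

/-- `δ = ½T + β` with boundary part `β = ½∂x∂y - ½∂y∂x + ¼∂y²`. -/
lemma delB_eq (v : Bw) : delB v = (1/2 : ℚ) • T v + ((1/2 : ℚ) • Dx (Dy v)
    - (1/2 : ℚ) • Dy (Dx v) + (1/4 : ℚ) • Dy (Dy v)) :=
  hom_ext (f := delB) (g := (1/2 : ℚ) • T + ((1/2 : ℚ) • Dx ∘ₗ Dy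
    - (1/2 : ℚ) • Dy ∘ₗ Dx + (1/4 : ℚ) • Dy ∘ₗ Dy)) (fun l => by
    rcases l with _ | ⟨_ | _, _ | ⟨_ | _, l⟩⟩ <;>
      simp [delB, T, Dx, Dy, deltaB] <;> try abel) v

/-! ### Words ending in `y` -/

/-- Words whose last letter is `y`. -/
inductive EndsY : List Bool → Prop
  | y : EndsY [true]
  | cons (a : Bool) {l : List Bool} : EndsY l → EndsY (a :: l)

/-- The span of the words ending in `y`. -/
def N : Submodule ℚ Bw := Submodule.span ℚ (wd '' {l | EndsY l})

/-- The span of the empty word and the words ending in `y`: the image of `𝔥¹`. -/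
def G : Submodule ℚ Bw := Submodule.span ℚ (wd '' {l | l = [] ∨ EndsY l})

lemma wd_mem_N {l : List Bool} (h : EndsY l) : wd l ∈ N := Submodule.subset_span ⟨l, h, rfl⟩
lemma wd_mem_G {l : List Bool} (h : l = [] ∨ EndsY l) : wd l ∈ G :=
  Submodule.subset_span ⟨l, h, rfl⟩
lemma N_le_G : N ≤ G := Submodule.span_mono (Set.image_mono fun _ h => Or.inr h)

lemma map_mem_of_N {f : Bw →ₗ[ℚ] Bw} {M : Submodule ℚ Bw}
    (h : ∀ l, EndsY l → f (wd l) ∈ M) {v : Bw} (hv : v ∈ N) : f v ∈ M := by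
  have : N ≤ M.comap f := Submodule.span_le.2 (by rintro _ ⟨l, hl, rfl⟩; exact h l hl)
  exact this hv

lemma map_mem_of_G {f : Bw →ₗ[ℚ] Bw} {M : Submodule ℚ Bw} (h0 : f (wd []) ∈ M)
    (h : ∀ l, EndsY l → f (wd l) ∈ M) {v : Bw} (hv : v ∈ G) : f v ∈ M := by
  have : G ≤ M.comap f := Submodule.span_le.2 (by
    rintro _ ⟨l, rfl | hl, rfl⟩
    exacts [h0, h l hl])
  exact this hv

lemma X_N {v : Bw} (hv : v ∈ N) : X v ∈ N :=
  map_mem_of_N (fun l hl => wd_false l ▸ wd_mem_N (hl.cons _)) hv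

lemma Y_G {v : Bw} (hv : v ∈ G) : Y v ∈ N :=
  map_mem_of_G (wd_true [] ▸ wd_mem_N .y) (fun l hl => wd_true l ▸ wd_mem_N (hl.cons _)) hv

lemma EndsY.tail {a : Bool} {l : List Bool} (h : EndsY (a :: l)) : l = [] ∨ EndsY l := by
  cases h with
  | y => exact Or.inl rfl
  | cons _ h => exact Or.inr h

lemma Dx_G {v : Bw} (hv : v ∈ G) : Dx v ∈ G := by
  refine map_mem_of_G (by simp) (fun l hl => ?_) hv
  rcases l with _ | ⟨_ | _, l⟩
  · simp
  · simpa [wd_false] using wd_mem_G hl.tail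
  · simp [wd_true]

lemma Dy_G {v : Bw} (hv : v ∈ G) : Dy v ∈ G := by
  refine map_mem_of_G (by simp) (fun l hl => ?_) hv
  rcases l with _ | ⟨_ | _, l⟩
  · simp
  · simp [wd_false]
  · simpa [wd_true] using wd_mem_G hl.tail

/-- Induction principle for membership in `N` of the image of a word ending in `y`. -/
lemma mem_N_rec {f : Bw →ₗ[ℚ] Bw} (h0 : f (Y (wd [])) ∈ N)
    (hX : ∀ v ∈ N, f v ∈ N → f (X v) ∈ N) (hY : ∀ v ∈ N, f v ∈ N → f (Y v) ∈ N)
    (l : List Bool) (hl : EndsY l) : f (wd l) ∈ N := by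
  induction hl with
  | y => exact wd_true [] ▸ h0
  | @cons a l hl ih =>
    cases a
    · exact wd_false l ▸ hX _ (wd_mem_N hl) ih
    · exact wd_true l ▸ hY _ (wd_mem_N hl) ih

lemma one_G : wd [] ∈ G := wd_mem_G (Or.inl rfl)

lemma S_G {v : Bw} (hv : v ∈ G) : S v ∈ N := by
  have hy : Y (wd []) ∈ N := Y_G one_G
  refine map_mem_of_G (by simpa using hy) (mem_N_rec ?_ (fun v hv h => ?_) fun v hv h => ?_) hv
  · simpa using N.add_mem (Y_G (N_le_G hy)) (Y_G (N_le_G hy))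
  · rw [S_X]; exact N.add_mem (X_N h) (Y_G (N_le_G (X_N hv)))
  · rw [S_Y]; exact N.add_mem (Y_G (N_le_G h)) (Y_G (N_le_G (Y_G (N_le_G hv))))

lemma P_G {v : Bw} (hv : v ∈ G) : P v ∈ N := by
  have hy : Y (wd []) ∈ N := Y_G one_G
  refine map_mem_of_G (by simpa using X_N hy)
    (mem_N_rec ?_ (fun v hv h => ?_) fun v hv h => ?_) hv
  · rw [P_Y, P_nil]
    exact N.add_mem (Y_G (N_le_G (X_N hy))) (X_N (S_G (N_le_G hy)))
  · rw [P_X]; exact N.add_mem (X_N h) (X_N (S_G (N_le_G (X_N hv))))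
  · rw [P_Y]; exact N.add_mem (Y_G (N_le_G h)) (X_N (S_G (N_le_G (Y_G (N_le_G hv)))))

lemma A_G {v : Bw} (hv : v ∈ G) : Ad v ∈ N := by
  have aux : ∀ v ∈ G, Ad v ∈ N → Ad (Y v) ∈ N := fun v hv h => by
    have := Y_G hv
    rw [A_Y]
    exact N.add_mem (N.add_mem (Y_G (N_le_G h)) (Y_G (N_le_G (X_N this)))) (X_N (X_N this))
  refine map_mem_of_G (by simp) (mem_N_rec (aux _ one_G (by simp)) (fun v hv h => ?_)
    fun v hv h => aux v (N_le_G hv) h) hv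
  rw [A_X]; exact X_N h

lemma T_G {v : Bw} (hv : v ∈ G) : T v ∈ N := by
  refine map_mem_of_G (by simp) (mem_N_rec (by simp) (fun v hv h => ?_) fun v hv h => ?_) hv
  · rw [T_X]; exact N.sub_mem (X_N h) (Y_G (Dy_G (Dy_G (N_le_G hv))))
  · rw [T_Y]; exact N.add_mem (Y_G (N_le_G h)) (Y_G (Dx_G (Dy_G (N_le_G hv))))

lemma phiB_G {v : Bw} (hv : v ∈ G) : phiB v ∈ G :=
  N_le_G (N.sub_mem (N.add_mem (X_N (Y_G hv)) (A_G hv)) (P_G hv))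

lemma delB_G {v : Bw} (hv : v ∈ G) : delB v ∈ G := by
  rw [delB_eq]
  exact G.add_mem (G.smul_mem _ (N_le_G (T_G hv))) (G.add_mem (G.sub_mem
    (G.smul_mem _ (Dx_G (Dy_G hv))) (G.smul_mem _ (Dy_G (Dx_G hv))))
    (G.smul_mem _ (Dy_G (Dy_G hv))))

/-! ### Commutators -/

lemma X_Dx_add_Y_Dy {l : List Bool} (hl : EndsY l) : X (Dx (wd l)) + Y (Dy (wd l)) = wd l := by
  rcases l with _ | ⟨_ | _, l⟩
  · cases hl
  · simp [wd_false]
  · simp [wd_true]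

/-- `[T, S] = -2∂x` on words ending in `y`: inserting a `y` next to an `x` creates the
replacements `yx → y` and `xy → y`, which cancel except for a leading `x`. -/
lemma T_S {l : List Bool} (hl : l = [] ∨ EndsY l) :
    T (S (wd l)) = S (T (wd l)) - (2 : ℚ) • Dx (wd l) := by
  rcases hl with rfl | hl
  · simp
  induction hl with
  | y => simp [wd_true]
  | @cons a l hl ih =>
    cases a
    -- The word `l` is recovered from its deletions because it is nonempty.
    · have key := X_Dx_add_Y_Dy hl
      rw [wd_false, Dx_X]
      simp only [S_X, T_X, T_Y, map_add, map_sub, ih, S_Y, Dy_S, Dy_X, map_smul, map_zero]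
      linear_combination (norm := module) (-2 : ℚ) • key
    · rw [wd_true]
      simp only [S_Y, T_Y, map_add, map_sub, ih, Dy_S, Dx_S, Dy_Y, Dx_Y, map_smul]
      module

/-- `[T, P] = -2·length` on words not ending in `x`. -/
lemma T_P {l : List Bool} (hl : l = [] ∨ EndsY l) :
    T (P (wd l)) = P (T (wd l)) - (2 : ℚ) • Len (wd l) := by
  induction l with
  | nil => simp
  | cons a l ih =>
    have hl' : l = [] ∨ EndsY l := by
      rcases hl with h | h
      · cases h
      · exact h.tail
    have ih := ih hl'
    have hS := T_S hl
    cases a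
    · rw [wd_false] at hS ⊢
      rw [P_X, map_add, T_X (P _), T_X (S _), hS, ih, Len_X, T_X, Dx_X]
      simp only [map_add, map_sub, map_smul, P_X, P_Y, Dy_P, Dy_S, Dy_X, map_zero]
      module
    · rw [wd_true] at hS ⊢
      rw [P_Y, map_add, T_Y (P _), T_X (S _), hS, ih, Len_Y, T_Y, Dx_Y]
      simp only [map_add, map_sub, map_smul, P_Y, Dx_P, Dy_P, Dy_S, Dy_Y, map_zero]
      module

/-- `[T, Ad] = -XY∂y²`. -/
lemma T_A (v : Bw) : T (Ad v) = Ad (T v) - X (Y (Dy (Dy v))) := by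
  refine hom_ext (f := T ∘ₗ Ad) (g := Ad ∘ₗ T - X ∘ₗ Y ∘ₗ Dy ∘ₗ Dy) (fun l => ?_) v
  simp only [LinearMap.comp_apply, LinearMap.sub_apply]
  induction l with
  | nil => simp
  | cons a l ih =>
    cases a
    · change T (Ad (wd _)) = Ad (T (wd _)) - X (Y (Dy (Dy (wd _))))
      rw [wd_false]
      simp only [A_X, T_X, map_add, map_sub, ih, A_Y, Dy_A, Dy_X, map_zero]
      module
    · change T (Ad (wd _)) = Ad (T (wd _)) - X (Y (Dy (Dy (wd _))))
      rw [wd_true]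
      simp only [A_Y, T_Y, T_X, map_add, map_sub, ih, Dx_A, Dy_A, Dx_X, Dy_X, Dy_Y, map_zero]
      module

/-- `[δ, φ] = length` on words not ending in `x`. -/
lemma comm_B {l : List Bool} (hl : l = [] ∨ EndsY l) :
    delB (phiB (wd l)) - phiB (delB (wd l)) = Len (wd l) := by
  have hP := T_P hl
  simp only [phiB, LinearMap.sub_apply, LinearMap.add_apply, LinearMap.comp_apply, delB_eq,
    map_add, map_sub, map_smul, T_A, hP, T_X, T_Y, Dx_A, Dy_A, Dx_P, Dy_P, Dx_X, Dy_X, Dy_Y,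
    Dy_S, map_zero]
  module

/-! ### Transport along `z_k = x^{k-1}y` -/

/-- `fromXY`, extended linearly. -/
def F : Bw →ₗ[ℚ] H := Finsupp.lmapDomain ℚ ℚ fromXY

/-- Left multiplication by `z_k`. -/
def Z (k : ℕ) : H →ₗ[ℚ] H := Finsupp.lmapDomain ℚ ℚ (k :: ·)

lemma fromXYAux_replicate (m c : ℕ) (t : List Bool) :
    fromXYAux (List.replicate m false ++ t) c = fromXYAux t (c + m) := by
  induction m generalizing c with
  | zero => rfl
  | succ m ih => simp [List.replicate_succ, fromXYAux, ih]; congr 1; omega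

lemma X_pow_wd (m : ℕ) (l : List Bool) :
    (X ^ m) (wd l) = wd (List.replicate m false ++ l) := by
  induction m with
  | zero => simp
  | succ m ih => rw [pow_succ', Module.End.mul_apply, ih, ← wd_false]; rfl

lemma F_X_pow_Y (m : ℕ) (v : Bw) : F ((X ^ m) (Y v)) = Z (m + 1) (F v) := by
  refine hom_ext (f := F ∘ₗ (X ^ m) ∘ₗ Y) (g := Z (m + 1) ∘ₗ F) (fun l => ?_) v
  simp only [LinearMap.comp_apply]
  rw [← wd_true, X_pow_wd]
  simp [F, Z, fromXY, fromXYAux_replicate, fromXYAux]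

lemma A_X_pow (m : ℕ) (v : Bw) : Ad ((X ^ m) v) = (X ^ m) (Ad v) := by
  induction m with
  | zero => simp
  | succ m ih => rw [pow_succ', Module.End.mul_apply, A_X, ih, Module.End.mul_apply]

lemma wd_toXY_cons (m : ℕ) (u : List ℕ) :
    wd (toXY ((m + 1) :: u)) = (X ^ m) (Y (wd (toXY u))) := by
  rw [← wd_true, X_pow_wd]
  simp [toXY]

lemma fromXY_toXY {a : List ℕ} (ha : ∀ k ∈ a, 1 ≤ k) : fromXY (toXY a) = a := by
  induction a with
  | nil => rfl
  | cons k u ih =>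
    obtain ⟨m, rfl⟩ : ∃ m, k = m + 1 := ⟨k - 1, by have := ha k (by simp); omega⟩
    have ih := ih fun k hk => ha k (by simp [hk])
    unfold fromXY at ih ⊢
    simp only [toXY, List.map_cons, List.flatten_cons, List.append_assoc, fromXYAux_replicate]
    simpa [fromXYAux, toXY] using ih

lemma toXY_good {a : List ℕ} : toXY a = [] ∨ EndsY (toXY a) := by
  induction a with
  | nil => exact Or.inl rfl
  | cons k u ih =>
    right
    have h : EndsY (true :: toXY u) := by
      rcases ih with h | h
      · rw [h]; exact .y
      · exact h.cons _
    have : toXY (k :: u) = List.replicate (k - 1) false ++ true :: toXY u := by simp [toXY]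
    rw [this]
    generalize k - 1 = m
    induction m with
    | zero => exact h
    | succ m ih => exact ih.cons _

lemma length_toXY {a : List ℕ} (ha : ∀ k ∈ a, 1 ≤ k) : (toXY a).length = a.sum := by
  induction a with
  | nil => rfl
  | cons k u ih =>
    have h1 := ha k (by simp)
    have ih := ih fun k hk => ha k (by simp [hk])
    have : toXY (k :: u) = List.replicate (k - 1) false ++ true :: toXY u := by simp [toXY]
    rw [this]
    simp [ih]
    omega

lemma one_le_of_mem_fromXYAux (l : List Bool) (c : ℕ) : ∀ k ∈ fromXYAux l c, 1 ≤ k := by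
  induction l generalizing c with
  | nil => simp [fromXYAux]
  | cons a l ih =>
    cases a
    · exact ih _
    · simpa [fromXYAux] using ih 0

lemma toXY_fromXYAux {l : List Bool} (hl : EndsY l) (c : ℕ) :
    toXY (fromXYAux l c) = List.replicate c false ++ l := by
  induction hl generalizing c with
  | y => simp [fromXYAux, toXY]
  | @cons a l hl ih =>
    cases a
    · rw [fromXYAux, ih, List.replicate_succ']; simp
    · have := ih 0
      simp only [toXY] at this
      simp [fromXYAux, toXY, this]

lemma toXY_fromXY {l : List Bool} (hl : l = [] ∨ EndsY l) : toXY (fromXY l) = l := by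
  rcases hl with rfl | hl
  · rfl
  · simpa [fromXY] using toXY_fromXYAux hl 0

/-- The harmonic product with `z₂` is the transport of `XY + Ad`. -/
lemma hmulW_two {a : List ℕ} (ha : ∀ k ∈ a, 1 ≤ k) :
    hmulW a [2] = F (X (Y (wd (toXY a))) + Ad (wd (toXY a))) := by
  have hXY : ∀ v, F (X (Y v)) = Z 2 (F v) := fun v => by simpa using F_X_pow_Y 1 v
  have hF : ∀ {a : List ℕ}, (∀ k ∈ a, 1 ≤ k) → F (wd (toXY a)) = Finsupp.single a 1 :=
    fun ha => by simp [F, fromXY_toXY ha]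
  induction a with
  | nil =>
    have : toXY [] = [] := rfl
    rw [this, A_nil, add_zero, hXY]
    simp [hmulW, F, Z, fromXY, fromXYAux]
  | cons k u ih =>
    obtain ⟨m, rfl⟩ : ∃ m, k = m + 1 := ⟨k - 1, by have := ha k (by simp); omega⟩
    have hu : ∀ k ∈ u, 1 ≤ k := fun k hk => ha k (by simp [hk])
    have ih := ih hu
    have hX2 : ∀ v, (X ^ m) (X (X v)) = (X ^ (m + 2)) v := fun v => by
      rw [pow_add, Module.End.mul_apply, pow_two, Module.End.mul_apply]
    have h0 : hmulW u [] = Finsupp.single u 1 := by cases u <;> simp [hmulW]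
    rw [map_add, hXY, hF ha, wd_toXY_cons, A_X_pow, A_Y, map_add, map_add, hX2, map_add, map_add,
      F_X_pow_Y, F_X_pow_Y, F_X_pow_Y, hF hu, hmulW, hmulW, h0, ih, map_add]
    simp only [Z, Finsupp.lmapDomain_apply, Finsupp.mapDomain_single, Finsupp.mapDomain_add]
    rw [show m + 2 + 1 = m + 1 + 2 by omega]
    abel

/-- `φ` as a linear map. -/
def phiL : H →ₗ[ℚ] H := lin fun a => hmulW a [2] - shmulW a [2]

lemma phiL_apply (w : H) : phi w = phiL w := by
  simp [phi, phiL, lin, hmul, shmul, zw, Finsupp.linearCombination_apply, smul_sub,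
    Finsupp.sum_sub]

/-- `δ` as a linear map. -/
def delL : H →ₗ[ℚ] H := lin fun a => F (deltaB (toXY a))

lemma delL_apply (w : H) : deltaH w = delL w := by
  simp [deltaH, delL, lin, F, Finsupp.linearCombination_apply]

lemma phiL_single {a : List ℕ} (ha : ∀ k ∈ a, 1 ≤ k) :
    phiL (Finsupp.single a 1) = F (phiB (wd (toXY a))) := by
  have h2 : toXY [2] = [false, true] := rfl
  have h3 : shmulW a [2] = F (P (wd (toXY a))) := by simp [shmulW, P, F, h2]
  rw [phiL, lin_single, hmulW_two ha, h3, ← map_sub]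
  rfl

lemma delL_single (a : List ℕ) : delL (Finsupp.single a 1) = F (delB (wd (toXY a))) := by
  simp [delL, delB]

lemma eq_on_G {M : Type*} [AddCommGroup M] [Module ℚ M] {f g : Bw →ₗ[ℚ] M}
    (h : ∀ l, l = [] ∨ EndsY l → f (wd l) = g (wd l)) {v : Bw} (hv : v ∈ G) : f v = g v := by
  have : G ≤ LinearMap.eqLocus f g :=
    Submodule.span_le.2 (by rintro _ ⟨l, hl, rfl⟩; exact h l hl)
  exact this hv

lemma F_wd (l : List Bool) : F (wd l) = Finsupp.single (fromXY l) 1 := by simp [F]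

lemma phiL_F {v : Bw} (hv : v ∈ G) : phiL (F v) = F (phiB v) :=
  eq_on_G (f := phiL ∘ₗ F) (g := F ∘ₗ phiB) (fun l hl => by
    simp only [LinearMap.comp_apply]
    rw [F_wd, phiL_single (a := fromXY l) (one_le_of_mem_fromXYAux l 0), toXY_fromXY hl]) hv

lemma delL_F {v : Bw} (hv : v ∈ G) : delL (F v) = F (delB v) :=
  eq_on_G (f := delL ∘ₗ F) (g := F ∘ₗ delB) (fun l hl => by
    simp only [LinearMap.comp_apply]
    rw [F_wd, delL_single, toXY_fromXY hl]) hv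

/-- `[δ, φ] = W` on a word of `𝔥¹`. -/
lemma comm_single {a : List ℕ} (ha : ∀ k ∈ a, 1 ≤ k) :
    delL (phiL (Finsupp.single a 1)) - phiL (delL (Finsupp.single a 1)) =
      Finsupp.single a (a.sum : ℚ) := by
  have hG := wd_mem_G (toXY_good (a := a))
  rw [phiL_single ha, delL_single, delL_F (phiB_G hG), phiL_F (delB_G hG), ← map_sub,
    comm_B toXY_good]
  simp [Len, F, length_toXY ha, fromXY_toXY ha]

end CommDeltaPhi

/-- `[δ, φ] = W` on `𝔥¹`. -/
theorem stmt3 (w : H) (hw : isH1 w) : deltaH (phi w) - phi (deltaH w) = Wop w := by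
  rw [CommDeltaPhi.phiL_apply, CommDeltaPhi.delL_apply, CommDeltaPhi.delL_apply,
    CommDeltaPhi.phiL_apply]
  set c := CommDeltaPhi.delL ∘ₗ CommDeltaPhi.phiL - CommDeltaPhi.phiL ∘ₗ CommDeltaPhi.delL with hc
  change c w = _
  conv_lhs => rw [← Finsupp.sum_single w]
  rw [Finsupp.sum, map_sum, Wop, Finsupp.sum]
  refine Finset.sum_congr rfl fun a ha => ?_
  have h1 : Finsupp.single a (w a) = w a • (Finsupp.single a 1 : H) := by simp
  have h2 : c (Finsupp.single a 1) = Finsupp.single a (a.sum : ℚ) :=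
    CommDeltaPhi.comm_single (hw a ha)
  rw [h1, map_smul, h2, Finsupp.smul_single, smul_eq_mul]
end
end

section
/- For all u, v ∈ 𝔥¹ one has δ(R(u,v)) = R(δ(u), v) + R(u, δ(v)). -/
/-!
The identity follows formally from two facts about `𝔥¹`:

* `δ` is a derivation for the harmonic product (`DeltaR.dH_hm`);
* `[δ, φ] = W`, the operator multiplying a word by its weight (`DeltaR.dH_ph`), and `W` is a
  derivation for the harmonic product as well (`DeltaR.wt_hm`).

Indeed `R` is the defect of `φ` from being a derivation, so `δ(R(u,v)) − R(δ(u),v) − R(u,δ(v))` is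
the defect of `[δ, φ]`, which vanishes.

For the first fact, rewrite `δ` in the letters `z_k`: with `∂_k` stripping a leading `z_k`,
`δ = ρ/2 − ∂₂/2 + ∂₁²/4`, where `ρ` sums the replacements `z₁ z_l ↦ z_{l-1}` minus
`z_l z₁ ↦ z_{l-1}` for `l ≥ 2` over all positions. The Leibniz rule for `ρ` is an induction on
words using `z_a u * z_b v = z_a(u * z_b v) + z_b(z_a u * v) + z_{a+b}(u * v)` (`DeltaR.rho_hm`).

For the second fact, as `δ(z₂) = −1/2` the derivation property gives
`δ(w * z₂) = δ(w) * z₂ − w/2`, so it remains to see that `δ(w ⧢ z₂) = δ(w) ⧢ z₂ − (|w| + 1/2) w`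
(`DeltaR.dB_sxy`). This is proved in the letters `x, y`, by induction on `w` through
`aw ⧢ xy = a(w ⧢ xy) + x(aw ⧢ y)` together with the analogous formula for `ρ(w ⧢ y)`, where `ρ` becomes
`Σ (yyx ↦ y) − Σ (xyy ↦ y)` in these letters (`DeltaR.rB_sy`). It requires
`w` to be empty or to end in `y`, so these supports are tracked throughout.
-/

open scoped Classical BigOperators

noncomputable section

namespace DeltaR

/-! ### Linear operators on words -/

/-- Left multiplication by a letter. -/
def pre {α : Type} (a : α) : (List α →₀ ℚ) →ₗ[ℚ] (List α →₀ ℚ) :=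
  Finsupp.lmapDomain ℚ ℚ (a :: ·)

/-- A word as a basis element. -/
abbrev wd {α : Type} (l : List α) : List α →₀ ℚ := Finsupp.single l 1

/-- The left derivative `∂_a`: strip the leading letter if it is `a`, and give `0` otherwise. -/
def dl {α : Type} [DecidableEq α] (a : α) : (List α →₀ ℚ) →ₗ[ℚ] (List α →₀ ℚ) :=
  Finsupp.linearCombination ℚ fun l => match l with
    | [] => 0
    | b :: t => if b = a then wd t else 0

/-- The combinations of basis elements satisfying `S`. -/
abbrev supp {α : Type} (S : α → Prop) : Submodule ℚ (α →₀ ℚ) := Finsupp.supported ℚ ℚ {a | S a}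

theorem map_eq_sum {α N : Type} [AddCommGroup N] [Module ℚ N] (f : (α →₀ ℚ) →ₗ[ℚ] N)
    (w : α →₀ ℚ) : f w = ∑ a ∈ w.support, w a • f (Finsupp.single a 1) := by
  conv_lhs => rw [← Finsupp.sum_single w, Finsupp.sum, map_sum]
  refine Finset.sum_congr rfl fun a _ => ?_
  rw [← map_smul, Finsupp.smul_single, smul_eq_mul, mul_one]

/-- Linear maps agreeing on the basis elements satisfying `S` agree on their span. -/
theorem ext_on {α N : Type} [AddCommGroup N] [Module ℚ N] {S : α → Prop}
    (f g : (α →₀ ℚ) →ₗ[ℚ] N)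
    (h : ∀ a, S a → f (Finsupp.single a 1) = g (Finsupp.single a 1))
    {w : α →₀ ℚ} (hw : w ∈ supp S) : f w = g w := by
  rw [map_eq_sum f, map_eq_sum g]
  exact Finset.sum_congr rfl fun a ha => by rw [h a (hw ha)]

theorem map_mem {α N : Type} [AddCommGroup N] [Module ℚ N] {S : α → Prop}
    (f : (α →₀ ℚ) →ₗ[ℚ] N) {P : Submodule ℚ N}
    (h : ∀ a, S a → f (Finsupp.single a 1) ∈ P) {w : α →₀ ℚ} (hw : w ∈ supp S) : f w ∈ P := by
  rw [map_eq_sum f]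
  exact P.sum_mem fun a ha => P.smul_mem _ (h a (hw ha))

theorem single_mem {α : Type} {S : α → Prop} {a : α} (h : S a) :
    (Finsupp.single a 1 : α →₀ ℚ) ∈ supp S :=
  Finsupp.single_mem_supported ℚ 1 h

theorem ext_all {α N : Type} [AddCommGroup N] [Module ℚ N]
    (f g : (α →₀ ℚ) →ₗ[ℚ] N)
    (h : ∀ a, f (Finsupp.single a 1) = g (Finsupp.single a 1))
    (w : α →₀ ℚ) : f w = g w :=
  ext_on (S := fun _ => True) f g (fun a _ => h a) fun _ _ => trivial

theorem pre_wd {α : Type} (a : α) (l : List α) : pre a (wd l) = wd (a :: l) := by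
  simp [pre]

theorem wd_cons {α : Type} (a : α) (l : List α) : wd (a :: l) = pre a (wd l) :=
  (pre_wd a l).symm

@[simp] theorem dl_nil {α : Type} [DecidableEq α] (a : α) : dl a (wd []) = 0 := by
  simp [dl]

@[simp] theorem dl_pre {α : Type} [DecidableEq α] (a b : α) (w : List α →₀ ℚ) :
    dl a (pre b w) = if b = a then w else 0 := by
  have := ext_all (dl a ∘ₗ pre b) (if b = a then LinearMap.id else 0)
    (fun l => by simp only [LinearMap.comp_apply, pre_wd]; split_ifs <;> simp_all [dl]) w
  simp only [LinearMap.comp_apply] at this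
  rw [this]; split_ifs <;> rfl

/-- The harmonic product as a bilinear map. -/
def hm : H →ₗ[ℚ] H →ₗ[ℚ] H :=
  Finsupp.linearCombination ℚ fun a => Finsupp.linearCombination ℚ (hmulW a)

theorem hmul_eq (u v : H) : hmul u v = hm u v := by
  simp [hmul, hm, Finsupp.linearCombination_apply, Finsupp.sum, LinearMap.sum_apply,
    Finset.smul_sum, smul_smul]

theorem hm_wd (a b : List ℕ) : hm (wd a) (wd b) = hmulW a b := by simp [hm]

@[simp] theorem hm_nil_left (w : H) : hm (wd []) w = w := by
  refine ext_all (hm (wd [])) LinearMap.id (fun l => ?_) w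
  rw [hm_wd, hmulW]; rfl

@[simp] theorem hm_nil_right (w : H) : hm w (wd []) = w := by
  refine ext_all (hm.flip (wd [])) LinearMap.id (fun l => ?_) w
  rw [LinearMap.flip_apply, hm_wd]
  cases l <;> rw [hmulW] <;> rfl

theorem hm_pre (a b : ℕ) (u v : H) :
    hm (pre a u) (pre b v) =
      pre a (hm u (pre b v)) + pre b (hm (pre a u) v) + pre (a + b) (hm u v) := by
  refine ext_all (hm.flip (pre b v) ∘ₗ pre a)
    (pre a ∘ₗ hm.flip (pre b v) + pre b ∘ₗ hm.flip v ∘ₗ pre a + pre (a + b) ∘ₗ hm.flip v)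
    (fun l => ?_) u
  refine ext_all (hm (pre a (wd l)) ∘ₗ pre b)
    (pre a ∘ₗ hm (wd l) ∘ₗ pre b + pre b ∘ₗ hm (pre a (wd l)) + pre (a + b) ∘ₗ hm (wd l))
    (fun m => ?_) v
  simp only [LinearMap.comp_apply, LinearMap.add_apply, pre_wd, hm_wd]
  rw [hmulW]; rfl

/-! ### The derivation property for the harmonic product -/

/-- Lower the first subscript by one when it is at least two, and give `0` otherwise. -/
def low : H →ₗ[ℚ] H :=
  Finsupp.linearCombination ℚ fun l => match l with
    | [] => 0
    | k :: t => if 2 ≤ k then wd ((k - 1) :: t) else 0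

@[simp] theorem low_nil : low (wd []) = 0 := by simp [low]

@[simp] theorem low_pre (k : ℕ) (w : H) :
    low (pre k w) = if 2 ≤ k then pre (k - 1) w else 0 := by
  have := ext_all (low ∘ₗ pre k) (if 2 ≤ k then pre (k - 1) else 0)
    (fun l => by simp only [LinearMap.comp_apply, pre_wd]; split_ifs <;> simp_all [low, pre_wd]) w
  simp only [LinearMap.comp_apply] at this
  rw [this]; split_ifs <;> rfl

/-- The contribution to `rho (z_k w)` of the factor starting at the first letter. -/
def hd (k : ℕ) : H →ₗ[ℚ] H := if k = 1 then low else -(pre (k - 1) ∘ₗ dl 1)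

/-- The operator `rho` on words, see below. -/
def rhoW : List ℕ → H
  | [] => 0
  | k :: u => pre k (rhoW u) + hd k (wd u)

/-- The operator `Σ (z₁ z_l ↦ z_{l-1}) − Σ (z_l z₁ ↦ z_{l-1})`, over all occurrences in a word of
such factors with `l ≥ 2`. -/
def rho : H →ₗ[ℚ] H := Finsupp.linearCombination ℚ rhoW

@[simp] theorem rho_nil : rho (wd []) = 0 := by simp [rho, rhoW]

theorem rho_pre (k : ℕ) (w : H) : rho (pre k w) = pre k (rho w) + hd k w := by
  refine ext_all (rho ∘ₗ pre k) (pre k ∘ₗ rho + hd k) (fun l => ?_) w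
  simp [rho, rhoW, pre_wd]

/-- Words all of whose subscripts are positive. -/
def Pos (l : List ℕ) : Prop := ∀ k ∈ l, 1 ≤ k

theorem pos_cons {k : ℕ} {l : List ℕ} : Pos (k :: l) ↔ 1 ≤ k ∧ Pos l := by simp [Pos]

theorem dl_one_hm {u v : List ℕ} (hu : Pos u) (hv : Pos v) :
    dl 1 (hm (wd u) (wd v)) = hm (dl 1 (wd u)) (wd v) + hm (wd u) (dl 1 (wd v)) := by
  rcases u with _ | ⟨a, u⟩
  · simp
  rcases v with _ | ⟨b, v⟩
  · simp
  rw [pos_cons] at hu hv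
  have h : a + b ≠ 1 := by omega
  simp only [wd_cons, hm_pre, map_add, dl_pre, if_neg h, add_zero]
  split_ifs <;> simp

theorem dl_two_hm {u v : List ℕ} (hu : Pos u) (hv : Pos v) :
    dl 2 (hm (wd u) (wd v)) = hm (dl 2 (wd u)) (wd v) + hm (wd u) (dl 2 (wd v))
      + hm (dl 1 (wd u)) (dl 1 (wd v)) := by
  rcases u with _ | ⟨a, u⟩
  · simp
  rcases v with _ | ⟨b, v⟩
  · simp
  rw [pos_cons] at hu hv
  simp only [wd_cons, hm_pre, map_add, dl_pre]
  have h : a + b = 2 ↔ a = 1 ∧ b = 1 := by omega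
  rw [if_congr h rfl rfl]
  split_ifs <;> first | omega | simp

/-- Failure of `low` to commute with the harmonic product by `z_b v`; the terms of
`low u * z_b v` with leading letter `z_b`, that is `pre b (hm (low u) v)`, do not occur on the left. -/
theorem low_hm_pre {u : List ℕ} (hu : Pos u) {b : ℕ} (hb : 1 ≤ b) (v : H) :
    low (hm (wd u) (pre b v)) = hm (low (wd u)) (pre b v) - pre b (hm (low (wd u)) v)
      + (if 2 ≤ b then pre (b - 1) (hm (wd u) v) else 0) + pre b (hm (dl 1 (wd u)) v) := by
  rcases u with _ | ⟨c, u⟩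
  · simp
  rw [pos_cons] at hu
  have h2 : 2 ≤ c + b := by omega
  simp only [wd_cons, hm_pre, map_add, dl_pre, low_pre, if_pos h2]
  by_cases hc : 2 ≤ c
  · have h1 : c ≠ 1 := by omega
    have h3 : c + b - 1 = c - 1 + b := by omega
    simp only [if_pos hc, if_neg h1, hm_pre, h3, map_zero, LinearMap.zero_apply]
    abel
  · have h1 : c = 1 := by omega
    subst h1
    simp

/-- The mirror image of `low_hm_pre`. -/
theorem low_pre_hm {v : List ℕ} (hv : Pos v) {a : ℕ} (ha : 1 ≤ a) (u : H) :
    low (hm (pre a u) (wd v)) = hm (pre a u) (low (wd v)) - pre a (hm u (low (wd v)))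
      + (if 2 ≤ a then pre (a - 1) (hm u (wd v)) else 0) + pre a (hm u (dl 1 (wd v))) := by
  rcases v with _ | ⟨c, v⟩
  · simp
  rw [pos_cons] at hv
  have h2 : 2 ≤ a + c := by omega
  simp only [wd_cons, hm_pre, map_add, dl_pre, low_pre, if_pos h2]
  by_cases hc : 2 ≤ c
  · have h1 : c ≠ 1 := by omega
    have h3 : a + c - 1 = a + (c - 1) := by omega
    simp only [if_pos hc, if_neg h1, hm_pre, h3, map_zero]
    abel
  · have h1 : c = 1 := by omega
    subst h1
    simp

/-- In the expansion of `z_a u * z_b v`, the head terms of `rho` satisfy the Leibniz rule by themselves,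
up to the products `pre b (hd a u * v)` and `pre a (u * hd b v)`, which the induction hypotheses of
`rho_hm` already account for. -/
theorem hd_cancel {a b : ℕ} {u v : List ℕ} (ha : 1 ≤ a) (hb : 1 ≤ b) (hu : Pos u) (hv : Pos v) :
    hd a (hm (wd u) (pre b (wd v))) + hd b (hm (pre a (wd u)) (wd v))
        + hd (a + b) (hm (wd u) (wd v)) =
      (hm (hd a (wd u)) (pre b (wd v)) - pre b (hm (hd a (wd u)) (wd v)))
        + (hm (pre a (wd u)) (hd b (wd v)) - pre a (hm (wd u) (hd b (wd v)))) := by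
  have hbv : Pos (b :: v) := pos_cons.2 ⟨hb, hv⟩
  have hau : Pos (a :: u) := pos_cons.2 ⟨ha, hu⟩
  have hab : a + b ≠ 1 := by omega
  have e1 := dl_one_hm hu hbv
  have e2 := dl_one_hm hau hv
  have e3 := dl_one_hm hu hv
  rw [wd_cons, dl_pre] at e1 e2
  by_cases h1 : a = 1 <;> by_cases h2 : b = 1
  · subst h1 h2
    simp only [hd, if_true, if_neg hab, low_hm_pre hu hb, low_pre_hm hv ha, LinearMap.neg_apply,
      LinearMap.comp_apply, e3, map_add]
    simp
    abel
  · subst h1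
    have h3 : 2 ≤ b := by omega
    simp only [hd, if_true, if_neg hab, if_neg h2, low_hm_pre hu hb, LinearMap.neg_apply,
      LinearMap.comp_apply, e3, e2, map_add, map_neg, if_pos h3, hm_pre,
      show 1 + b - 1 = b by omega, show 1 + (b - 1) = b by omega]
    abel
  · subst h2
    have h3 : 2 ≤ a := by omega
    simp only [hd, if_true, if_neg hab, if_neg h1, low_pre_hm hv ha, LinearMap.neg_apply,
      LinearMap.comp_apply, e3, e1, map_add, map_neg, if_pos h3, hm_pre,
      show a + 1 - 1 = a by omega, show a - 1 + 1 = a by omega]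
    abel
  · simp only [hd, if_neg hab, if_neg h1, if_neg h2, LinearMap.neg_apply,
      LinearMap.comp_apply, e3, e1, e2, map_add, map_neg, map_zero, LinearMap.zero_apply, hm_pre,
      show a - 1 + b = a + b - 1 by omega, show a + (b - 1) = a + b - 1 by omega]
    abel

/-- `rho` is a derivation of the harmonic algebra. -/
theorem rho_hm (u v : List ℕ) (hu : Pos u) (hv : Pos v) :
    rho (hm (wd u) (wd v)) = hm (rho (wd u)) (wd v) + hm (wd u) (rho (wd v)) := by
  induction u generalizing v with
  | nil => simp
  | cons a u ihu =>
    induction v with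
    | nil => simp
    | cons b v ihv =>
      have h1 := ihu (b :: v) (pos_cons.1 hu).2 hv
      have h2 := ihv (pos_cons.1 hv).2
      have h3 := ihu v (pos_cons.1 hu).2 (pos_cons.1 hv).2
      have h4 := hd_cancel (pos_cons.1 hu).1 (pos_cons.1 hv).1 (pos_cons.1 hu).2 (pos_cons.1 hv).2
      rw [wd_cons] at h1 h2
      rw [wd_cons, wd_cons]
      simp only [hm_pre, map_add, rho_pre, h1, h2, h3, LinearMap.add_apply] at h4 ⊢
      rw [eq_sub_of_add_eq (eq_sub_of_add_eq h4)]
      abel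

/-- The map `δ` in terms of the letters `z_k`. -/
def dz : H →ₗ[ℚ] H :=
  (1/2 : ℚ) • rho - (1/2 : ℚ) • dl 2 + (1/4 : ℚ) • (dl 1 ∘ₗ dl 1)

theorem dl_pos {u : List ℕ} (hu : Pos u) (k : ℕ) :
    dl k (wd u) = 0 ∨ ∃ t, Pos t ∧ dl k (wd u) = wd t := by
  rcases u with _ | ⟨a, u⟩
  · simp
  · rw [wd_cons, dl_pre]
    split_ifs
    · exact Or.inr ⟨u, (pos_cons.1 hu).2, rfl⟩
    · exact Or.inl rfl

/-- `δ` is a derivation of the harmonic algebra. Neither `∂₂` nor `∂₁²` is one, but their defects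
`∂₁u * ∂₁v` and `2 ∂₁u * ∂₁v` cancel in `-∂₂/2 + ∂₁²/4`. -/
theorem dz_hm (u v : List ℕ) (hu : Pos u) (hv : Pos v) :
    dz (hm (wd u) (wd v)) = hm (dz (wd u)) (wd v) + hm (wd u) (dz (wd v)) := by
  have h1 : dl 1 (hm (dl 1 (wd u)) (wd v))
      = hm (dl 1 (dl 1 (wd u))) (wd v) + hm (dl 1 (wd u)) (dl 1 (wd v)) := by
    rcases dl_pos hu 1 with h | ⟨t, ht, h⟩
    · simp [h]
    · rw [h, dl_one_hm ht hv]
  have h2 : dl 1 (hm (wd u) (dl 1 (wd v)))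
      = hm (dl 1 (wd u)) (dl 1 (wd v)) + hm (wd u) (dl 1 (dl 1 (wd v))) := by
    rcases dl_pos hv 1 with h | ⟨t, ht, h⟩
    · simp [h]
    · rw [h, dl_one_hm hu ht]
  simp only [dz, LinearMap.add_apply, LinearMap.sub_apply, LinearMap.smul_apply,
    LinearMap.comp_apply, rho_hm u v hu hv, dl_two_hm hu hv, dl_one_hm hu hv, map_add, map_sub,
    map_smul, h1, h2]
  module

/-! ### The map `δ` and shuffles of words in two letters -/

/-- The contribution to `rB (a w)` of the factor starting at the first letter. -/
def hB : Bool → Bw →ₗ[ℚ] Bw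
  | true => pre true ∘ₗ dl false ∘ₗ dl true
  | false => -(pre true ∘ₗ dl true ∘ₗ dl true)

/-- The operator `Σ (yyx ↦ y) − Σ (xyy ↦ y)`. -/
def rB : Bw →ₗ[ℚ] Bw := Finsupp.linearCombination ℚ fun l =>
  replaceOcc [true, true, false] l - replaceOcc [false, true, true] l

@[simp] theorem rB_nil : rB (wd []) = 0 := by simp [rB, replaceOcc]

theorem rB_pre (a : Bool) (w : Bw) : rB (pre a w) = pre a (rB w) + hB a w := by
  refine ext_all (rB ∘ₗ pre a) (pre a ∘ₗ rB + hB a) (fun l => ?_) w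
  have h : ∀ p, Finsupp.mapDomain (a :: ·) (replaceOcc p l) = pre a (replaceOcc p l) :=
    fun _ => rfl
  simp only [LinearMap.comp_apply, LinearMap.add_apply, pre_wd]
  simp only [rB, Finsupp.linearCombination_single, one_smul, replaceOcc, h, map_sub]
  rcases l with _ | ⟨b, _ | ⟨c, t⟩⟩
  · cases a <;> simp [hB]
  · cases a <;> cases b <;> simp [hB, wd_cons]
  · cases a <;> cases b <;> cases c <;> simp [hB, wd_cons] <;> abel

/-- The map `δ` on all of `ℚ⟨x, y⟩`. -/
def dB : Bw →ₗ[ℚ] Bw :=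
  (1/2 : ℚ) • (dl false ∘ₗ dl true) - (1/2 : ℚ) • (dl true ∘ₗ dl false)
    + (1/4 : ℚ) • (dl true ∘ₗ dl true) + (1/2 : ℚ) • rB

theorem dB_wd (l : List Bool) : dB (wd l) = deltaB l := by
  simp only [dB, deltaB, rB, LinearMap.add_apply, LinearMap.sub_apply, LinearMap.smul_apply,
    LinearMap.comp_apply, Finsupp.linearCombination_single, one_smul]
  rcases l with _ | ⟨b, _ | ⟨c, t⟩⟩
  · simp
  · cases b <;> simp [wd_cons]
  · cases b <;> cases c <;> simp [wd_cons]

/-- The shuffle product with `y`. -/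
def sy : Bw →ₗ[ℚ] Bw := Finsupp.linearCombination ℚ fun l => shW l [true]

/-- The shuffle product with `xy = z₂`. -/
def sxy : Bw →ₗ[ℚ] Bw := Finsupp.linearCombination ℚ fun l => shW l [false, true]

@[simp] theorem sy_nil : sy (wd []) = pre true (wd []) := by simp [sy, shW, pre_wd]

@[simp] theorem sxy_nil : sxy (wd []) = pre false (pre true (wd [])) := by simp [sxy, shW, pre_wd]

theorem shW_nil (l : List Bool) : shW l [] = wd l := by cases l <;> rw [shW]

theorem sy_pre (a : Bool) (w : Bw) : sy (pre a w) = pre a (sy w) + pre true (pre a w) := by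
  refine ext_all (sy ∘ₗ pre a) (pre a ∘ₗ sy + pre true ∘ₗ pre a) (fun l => ?_) w
  simp only [LinearMap.comp_apply, LinearMap.add_apply, pre_wd]
  simp only [sy, Finsupp.linearCombination_single, one_smul]
  rw [shW, shW_nil, ← pre_wd true]; rfl

theorem sxy_pre (a : Bool) (w : Bw) :
    sxy (pre a w) = pre a (sxy w) + pre false (sy (pre a w)) := by
  refine ext_all (sxy ∘ₗ pre a) (pre a ∘ₗ sxy + pre false ∘ₗ sy ∘ₗ pre a) (fun l => ?_) w
  simp only [LinearMap.comp_apply, LinearMap.add_apply, pre_wd]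
  simp only [sy, sxy, Finsupp.linearCombination_single, one_smul]
  rw [shW]; rfl

theorem dl_true_sy (w : Bw) : dl true (sy w) = sy (dl true w) + w := by
  refine ext_all (dl true ∘ₗ sy) (sy ∘ₗ dl true + LinearMap.id) (fun l => ?_) w
  rcases l with _ | ⟨a, l⟩
  · simp
  · cases a <;> simp [wd_cons, sy_pre]

theorem dl_false_sy (w : Bw) : dl false (sy w) = sy (dl false w) := by
  refine ext_all (dl false ∘ₗ sy) (sy ∘ₗ dl false) (fun l => ?_) w
  rcases l with _ | ⟨a, l⟩
  · simp
  · cases a <;> simp [wd_cons, sy_pre]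

theorem dl_true_sxy (w : Bw) : dl true (sxy w) = sxy (dl true w) := by
  refine ext_all (dl true ∘ₗ sxy) (sxy ∘ₗ dl true) (fun l => ?_) w
  rcases l with _ | ⟨a, l⟩
  · simp
  · cases a <;> simp [wd_cons, sxy_pre]

theorem dl_false_sxy (w : Bw) : dl false (sxy w) = sxy (dl false w) + sy w := by
  refine ext_all (dl false ∘ₗ sxy) (sxy ∘ₗ dl false + sy) (fun l => ?_) w
  rcases l with _ | ⟨a, l⟩
  · simp
  · cases a <;> simp [wd_cons, sxy_pre]

/-- Words in `x, y` that are empty or end in `y`, i.e. the words spanning `𝔥¹`. -/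
def Good : List Bool → Prop
  | [] => True
  | [a] => a = true
  | _ :: b :: t => Good (b :: t)

theorem good_tail {a : Bool} {l : List Bool} (h : Good (a :: l)) : Good l := by
  cases l
  · trivial
  · exact h

theorem good_true {l : List Bool} (h : Good l) : Good (true :: l) := by
  cases l
  · rfl
  · exact h

theorem good_cons {a : Bool} {l : List Bool} (h : Good l) (hl : l ≠ []) : Good (a :: l) := by
  cases l
  · exact absurd rfl hl
  · exact h

/-- A good word starting with `x` has a nonempty tail, which is recovered from its left derivatives. -/
theorem wd_eq_pre_dl {a : Bool} {l : List Bool} (h : Good (a :: l)) :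
    a = true ∨ wd l = pre true (dl true (wd l)) + pre false (dl false (wd l)) := by
  rcases l with _ | ⟨b, l⟩
  · exact Or.inl h
  · right
    cases b <;> simp [wd_cons]

/-- Inserting a `y` next to a factor `yx` (resp. `xy`) creates `yyx` (resp. `xyy`) in two ways, so
the defect is `2 (Σ (yx ↦ y) − Σ (xy ↦ y))`. Both sums shorten a run of letters `x` by one, and they
cancel on every run lying between two letters `y`. As a good word does not end in `x`, only a
leading run of `x` survives. -/
theorem rB_sy (l : List Bool) (hl : Good l) :
    rB (sy (wd l)) = sy (rB (wd l)) - (2 : ℚ) • dl false (wd l) := by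
  induction l with
  | nil => simp [rB_pre, hB]
  | cons a l ih =>
    have h := ih (good_tail hl)
    rcases wd_eq_pre_dl hl with rfl | h1
    · simp only [wd_cons, sy_pre, rB_pre, map_add, h, hB, LinearMap.comp_apply, dl_true_sy,
        dl_false_sy, dl_pre, map_sub, map_smul]
      simp
      module
    · cases a
      · simp only [wd_cons, sy_pre, rB_pre, map_add, h, hB, LinearMap.comp_apply, dl_true_sy,
          dl_pre, map_sub, map_smul, LinearMap.neg_apply, map_neg]
        simp [-Finsupp.smul_single]
        have h2 := congrArg ((2 : ℚ) • ·) h1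
        simp only [smul_add] at h2
        rw [h2]
        module
      · simp only [wd_cons, sy_pre, rB_pre, map_add, h, hB, LinearMap.comp_apply, dl_true_sy,
          dl_false_sy, dl_pre, map_sub, map_smul]
        simp
        module

/-- Each letter of the word accounts for a defect of `-2` times the word. -/
theorem rB_sxy (l : List Bool) (hl : Good l) :
    rB (sxy (wd l)) = sxy (rB (wd l)) - (2 * l.length : ℚ) • wd l := by
  induction l with
  | nil => simp [rB_pre, hB]
  | cons a l ih =>
    have h := ih (good_tail hl)
    have h2 := rB_sy (a :: l) hl
    rw [wd_cons] at h2
    rw [wd_cons, sxy_pre, map_add, rB_pre, rB_pre, h2, h]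
    cases a
    · simp only [rB_pre, sy_pre, sxy_pre, map_add, hB, LinearMap.comp_apply,
        dl_true_sxy, dl_pre, map_sub, map_smul, LinearMap.neg_apply, map_neg]
      simp
      module
    · simp only [rB_pre, sy_pre, sxy_pre, map_add, hB, LinearMap.comp_apply,
        dl_true_sxy, dl_false_sxy, dl_pre, map_sub, map_smul]
      simp [dl_true_sy]
      module

/-- On words ending in `y`, `δ(w ⧢ z₂) = δ(w) ⧢ z₂ − (|w| + 1/2) w`. -/
theorem dB_sxy (l : List Bool) (hl : Good l) :
    dB (sxy (wd l)) = sxy (dB (wd l)) - (l.length + 1/2 : ℚ) • wd l := by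
  simp only [dB, LinearMap.add_apply, LinearMap.sub_apply, LinearMap.smul_apply,
    LinearMap.comp_apply, dl_true_sy, dl_true_sxy, dl_false_sxy, map_add, map_sub,
    map_smul, rB_sxy l hl]
  module

/-- Combinations of nonempty words ending in `y`. -/
abbrev Good₁ : Submodule ℚ Bw := supp fun l => Good l ∧ l ≠ []

theorem good₁_le : Good₁ ≤ supp Good := Finsupp.supported_mono fun _ h => h.1

theorem pre_mem_good₁ (a : Bool) {w : Bw} (hw : w ∈ Good₁) : pre a w ∈ Good₁ :=
  map_mem (pre a) (fun l h => by
    rw [pre_wd]; exact single_mem ⟨good_cons h.1 h.2, by simp⟩) hw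

theorem pre_true_mem {w : Bw} (hw : w ∈ supp Good) : pre true w ∈ Good₁ :=
  map_mem (pre true) (fun l h => by rw [pre_wd]; exact single_mem ⟨good_true h, by simp⟩) hw

theorem dl_mem (a : Bool) {w : Bw} (hw : w ∈ supp Good) : dl a w ∈ supp Good := by
  refine map_mem (dl a) (fun l h => ?_) hw
  rcases l with _ | ⟨b, l⟩
  · simp
  · change dl a (wd (b :: l)) ∈ _
    rw [wd_cons, dl_pre]
    split_ifs
    · exact single_mem (good_tail h)
    · exact zero_mem _

theorem sy_mem (l : List Bool) (hl : Good l) : sy (wd l) ∈ Good₁ := by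
  induction l with
  | nil => exact sy_nil ▸ pre_true_mem (single_mem hl)
  | cons a l ih =>
    rw [wd_cons, sy_pre, ← wd_cons]
    exact add_mem (pre_mem_good₁ a (ih (good_tail hl))) (pre_true_mem (single_mem hl))

theorem sxy_mem (l : List Bool) (hl : Good l) : sxy (wd l) ∈ Good₁ := by
  induction l with
  | nil => exact sxy_nil ▸ pre_mem_good₁ _ (pre_true_mem (single_mem hl))
  | cons a l ih =>
    rw [wd_cons, sxy_pre, ← wd_cons]
    exact add_mem (pre_mem_good₁ a (ih (good_tail hl))) (pre_mem_good₁ _ (sy_mem _ hl))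

theorem rB_mem (l : List Bool) (hl : Good l) : rB (wd l) ∈ Good₁ := by
  induction l with
  | nil => simp
  | cons a l ih =>
    have hl' : wd l ∈ supp Good := single_mem (good_tail hl)
    rw [wd_cons, rB_pre]
    refine add_mem (pre_mem_good₁ a (ih (good_tail hl))) ?_
    cases a
    · exact neg_mem (pre_true_mem (dl_mem _ (dl_mem _ hl')))
    · exact pre_true_mem (dl_mem _ (dl_mem _ hl'))

theorem dB_mem (l : List Bool) (hl : Good l) : dB (wd l) ∈ supp Good := by
  have hl' : wd l ∈ supp Good := single_mem hl
  have h (a b : Bool) : dl a (dl b (wd l)) ∈ supp Good := dl_mem a (dl_mem b hl')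
  exact add_mem (add_mem (sub_mem (Submodule.smul_mem _ _ (h _ _)) (Submodule.smul_mem _ _ (h _ _)))
    (Submodule.smul_mem _ _ (h _ _))) (Submodule.smul_mem _ _ (good₁_le (rB_mem l hl)))

/-! ### The dictionary `z_k = x^{k-1} y` -/

/-- The linear map reading a word in `x, y` as a word in the `z_k`. -/
def F : Bw →ₗ[ℚ] H := Finsupp.lmapDomain ℚ ℚ fromXY

@[simp] theorem F_wd (l : List Bool) : F (wd l) = wd (fromXY l) := by simp [F]

theorem fromXYAux_rep (m c : ℕ) (l : List Bool) :
    fromXYAux (List.replicate m false ++ true :: l) c = (c + m + 1) :: fromXYAux l 0 := by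
  induction m generalizing c with
  | zero => simp [fromXYAux]
  | succ m ih =>
    rw [List.replicate_succ, List.cons_append, fromXYAux, ih]
    congr 1
    omega

theorem toXY_cons (k : ℕ) (u : List ℕ) :
    toXY (k :: u) = List.replicate (k - 1) false ++ true :: toXY u := by
  simp [toXY]

theorem toXY_fromXYAux (l : List Bool) (c : ℕ) (hl : Good l) (h : l ≠ []) :
    toXY (fromXYAux l c) = List.replicate c false ++ l := by
  induction l generalizing c with
  | nil => exact absurd rfl h
  | cons a l ih =>
    cases a
    · have h' : l ≠ [] := by rintro rfl; simp [Good] at hl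
      rw [fromXYAux, ih _ (good_tail hl) h', List.replicate_succ']
      simp
    · rw [fromXYAux, toXY_cons]
      by_cases h' : l = []
      · subst h'; simp [fromXYAux, toXY]
      · rw [ih _ (good_tail hl) h']; simp

theorem toXY_fromXY (l : List Bool) (hl : Good l) : toXY (fromXY l) = l := by
  by_cases h : l = []
  · subst h; simp [fromXY, fromXYAux, toXY]
  · rw [fromXY, toXY_fromXYAux l 0 hl h]; simp

theorem good_toXY (u : List ℕ) : Good (toXY u) := by
  induction u with
  | nil => trivial
  | cons k u ih =>
    rw [toXY_cons]
    have h : ∀ m, Good (List.replicate m false ++ true :: toXY u) := by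
      intro m
      induction m with
      | zero => exact good_true ih
      | succ m ihm => exact good_cons ihm (by simp)
    exact h _

theorem fromXY_toXY (u : List ℕ) (hu : Pos u) : fromXY (toXY u) = u := by
  induction u with
  | nil => simp [fromXY, fromXYAux, toXY]
  | cons k u ih =>
    rw [pos_cons] at hu
    rw [toXY_cons, fromXY, fromXYAux_rep]
    congr 1
    · omega
    · exact ih hu.2

theorem length_toXY (u : List ℕ) (hu : Pos u) : (toXY u).length = u.sum := by
  induction u with
  | nil => simp [toXY]
  | cons k u ih =>
    rw [pos_cons] at hu
    rw [toXY_cons, List.length_append, List.length_cons, ih hu.2, List.length_replicate,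
      List.sum_cons]
    omega

theorem pos_fromXYAux (l : List Bool) (c : ℕ) : Pos (fromXYAux l c) := by
  induction l generalizing c with
  | nil => simp [fromXYAux, Pos]
  | cons a l ih =>
    cases a
    · exact ih _
    · rw [fromXYAux, pos_cons]
      exact ⟨by omega, ih _⟩

theorem F_mem (b : Bw) : F b ∈ supp Pos :=
  map_mem (S := fun _ => True) F
    (fun l _ => by rw [F_wd]; exact single_mem (pos_fromXYAux l 0)) fun _ _ => trivial

/-- Left multiplication by `x^m y`. -/
def zpre (m : ℕ) (w : Bw) : Bw := (pre false)^[m] (pre true w)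

theorem zpre_zero (w : Bw) : zpre 0 w = pre true w := rfl

theorem zpre_succ (m : ℕ) (w : Bw) : zpre (m + 1) w = pre false (zpre m w) :=
  Function.iterate_succ_apply' _ _ _

theorem wd_toXY_cons (k : ℕ) (u : List ℕ) : wd (toXY (k :: u)) = zpre (k - 1) (wd (toXY u)) := by
  rw [toXY_cons]
  induction k - 1 with
  | zero => rw [zpre_zero, pre_wd]; rfl
  | succ m ih => rw [zpre_succ, ← ih, pre_wd]; rfl

theorem zpre_wd (m : ℕ) (l : List Bool) :
    zpre m (wd l) = wd (List.replicate m false ++ true :: l) := by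
  induction m with
  | zero => rw [zpre_zero, pre_wd]; rfl
  | succ m ih => rw [zpre_succ, ih, pre_wd]; rfl

theorem zpre_lin (m : ℕ) : ∃ f : Bw →ₗ[ℚ] Bw, ∀ w, zpre m w = f w :=
  ⟨((pre false : Bw →ₗ[ℚ] Bw) ^ m) ∘ₗ pre true, fun w => by simp [zpre, Module.End.pow_apply]⟩

theorem F_zpre (m : ℕ) (w : Bw) : F (zpre m w) = pre (m + 1) (F w) := by
  obtain ⟨f, hf⟩ := zpre_lin m
  rw [hf]
  refine ext_all (F ∘ₗ f) (pre (m + 1) ∘ₗ F) (fun l => ?_) w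
  simp only [LinearMap.comp_apply]
  rw [← hf, zpre_wd, F_wd, F_wd, pre_wd, fromXY, fromXYAux_rep, fromXY, zero_add]

theorem rB_zpre_zero (w : Bw) :
    rB (zpre 0 w) = zpre 0 (dl false (dl true w) + rB w) := by
  simp only [zpre_zero, rB_pre, hB, LinearMap.comp_apply, map_add]
  abel

theorem rB_zpre_succ (m : ℕ) (w : Bw) :
    rB (zpre (m + 1) w) = zpre (m + 1) (dl false (dl true w) + rB w) - zpre m (dl true w) := by
  induction m with
  | zero =>
    simp [zpre_succ, zpre_zero, rB_pre, hB]
    abel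
  | succ m ih =>
    rw [zpre_succ, rB_pre, ih, map_sub, ← zpre_succ, ← zpre_succ]
    simp [hB, zpre_succ]

theorem F_dl_true (u : List ℕ) (hu : Pos u) : F (dl true (wd (toXY u))) = dl 1 (wd u) := by
  rcases u with _ | ⟨k, u⟩
  · simp [toXY]
  obtain ⟨hk, hu'⟩ := pos_cons.1 hu
  obtain ⟨k, rfl⟩ := Nat.exists_eq_add_of_le' hk
  rw [wd_toXY_cons, wd_cons, Nat.add_sub_cancel]
  cases k <;> simp [zpre_zero, zpre_succ, fromXY_toXY u hu']

theorem F_dl_false (u : List ℕ) (hu : Pos u) : F (dl false (wd (toXY u))) = low (wd u) := by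
  rcases u with _ | ⟨k, u⟩
  · simp [toXY]
  obtain ⟨hk, hu'⟩ := pos_cons.1 hu
  obtain ⟨k, rfl⟩ := Nat.exists_eq_add_of_le' hk
  rw [wd_toXY_cons, wd_cons, Nat.add_sub_cancel]
  cases k <;> simp [zpre_zero, zpre_succ, F_zpre, fromXY_toXY u hu']

theorem F_dl_true_false (u : List ℕ) (hu : Pos u) :
    F (dl true (dl false (wd (toXY u)))) = dl 2 (wd u) := by
  rcases u with _ | ⟨k, u⟩
  · simp [toXY]
  obtain ⟨hk, hu'⟩ := pos_cons.1 hu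
  obtain ⟨k, rfl⟩ := Nat.exists_eq_add_of_le' hk
  rw [wd_toXY_cons, wd_cons, Nat.add_sub_cancel]
  rcases k with _ | _ | k <;> simp [zpre_zero, zpre_succ, fromXY_toXY u hu']

theorem F_dl_true_true (u : List ℕ) (hu : Pos u) :
    F (dl true (dl true (wd (toXY u)))) = dl 1 (dl 1 (wd u)) := by
  rcases u with _ | ⟨k, u⟩
  · simp [toXY]
  obtain ⟨hk, hu'⟩ := pos_cons.1 hu
  obtain ⟨k, rfl⟩ := Nat.exists_eq_add_of_le' hk
  rw [wd_toXY_cons, wd_cons, Nat.add_sub_cancel]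
  cases k <;> simp [zpre_zero, zpre_succ, F_dl_true u hu']

/-- The leading factor `yx` contributes to `δ` like an interior factor `yyx`, so that both are
captured by the single rule `z₁ z_l ↦ z_{l-1}`. -/
theorem F_rB (u : List ℕ) (hu : Pos u) :
    F (dl false (dl true (wd (toXY u))) + rB (wd (toXY u))) = rho (wd u) := by
  induction u with
  | nil => simp [toXY]
  | cons k u ih =>
    obtain ⟨hk, hu'⟩ := pos_cons.1 hu
    obtain ⟨k, rfl⟩ := Nat.exists_eq_add_of_le' hk
    rw [wd_toXY_cons, wd_cons, Nat.add_sub_cancel, rho_pre, map_add]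
    cases k with
    | zero =>
      rw [rB_zpre_zero, F_zpre, ih hu', zpre_zero, dl_pre, if_pos rfl, F_dl_false u hu']
      simp [hd]
      abel
    | succ k =>
      rw [rB_zpre_succ, map_sub, F_zpre, F_zpre, ih hu', F_dl_true u hu']
      simp [hd, zpre_succ]
      abel

/-- In the letters `z_k`, the map `δ` takes the form `dz`. -/
theorem F_dB (u : List ℕ) (hu : Pos u) : F (dB (wd (toXY u))) = dz (wd u) := by
  have h := F_rB u hu
  rw [map_add] at h
  simp only [dB, dz, LinearMap.add_apply, LinearMap.sub_apply, LinearMap.smul_apply,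
    LinearMap.comp_apply, map_add, map_sub, map_smul, F_dl_true_false u hu, F_dl_true_true u hu,
    ← h]
  module

/-! ### The commutation relation and the main identity -/

/-- The linear map writing a word in the `z_k` as a word in `x, y`. -/
def X : H →ₗ[ℚ] Bw := Finsupp.lmapDomain ℚ ℚ toXY

@[simp] theorem X_wd (u : List ℕ) : X (wd u) = wd (toXY u) := by simp [X]

/-- The map `δ` on `𝔥¹` as a linear map. -/
def dH : H →ₗ[ℚ] H := F ∘ₗ dB ∘ₗ X

/-- The shuffle product with `z₂` on `𝔥¹` as a linear map. -/
def s2 : H →ₗ[ℚ] H := F ∘ₗ sxy ∘ₗ X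

theorem deltaH_eq (w : H) : deltaH w = dH w := by
  have : deltaH w =
      Finsupp.linearCombination ℚ (fun a => Finsupp.mapDomain fromXY (deltaB (toXY a))) w := rfl
  rw [this]
  refine ext_all _ _ (fun l => ?_) w
  rw [Finsupp.linearCombination_single, one_smul, dH, LinearMap.comp_apply, LinearMap.comp_apply,
    X_wd, dB_wd]
  rfl

theorem shmul_eq (w : H) : shmul w (zw [2]) = s2 w := by
  have : shmul w (zw [2]) = Finsupp.linearCombination ℚ (fun a => shmulW a [2]) w := by
    simp [shmul, zw, Finsupp.linearCombination_apply]
  rw [this]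
  refine ext_all _ _ (fun l => ?_) w
  rw [Finsupp.linearCombination_single, one_smul, s2, LinearMap.comp_apply, LinearMap.comp_apply,
    X_wd, sxy, Finsupp.linearCombination_single, one_smul]
  rfl

theorem dH_F {b : Bw} (hb : b ∈ supp Good) : dH (F b) = F (dB b) :=
  ext_on (dH ∘ₗ F) (F ∘ₗ dB) (fun l hl => by
    simp only [LinearMap.comp_apply, dH, F_wd, X_wd, toXY_fromXY l hl]) hb

theorem s2_F {b : Bw} (hb : b ∈ supp Good) : s2 (F b) = F (sxy b) :=
  ext_on (s2 ∘ₗ F) (F ∘ₗ sxy) (fun l hl => by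
    simp only [LinearMap.comp_apply, s2, F_wd, X_wd, toXY_fromXY l hl]) hb

theorem dH_s2 (u : List ℕ) (hu : Pos u) :
    dH (s2 (wd u)) = s2 (dH (wd u)) - (u.sum + 1/2 : ℚ) • wd u := by
  have hg := good_toXY u
  have h1 : s2 (wd u) = F (sxy (wd (toXY u))) := by simp [s2]
  have h2 : dH (wd u) = F (dB (wd (toXY u))) := by simp [dH]
  rw [h1, h2, dH_F (good₁_le (sxy_mem _ hg)), s2_F (dB_mem _ hg), dB_sxy _ hg, map_sub, map_smul,
    F_wd, fromXY_toXY u hu, length_toXY u hu]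

theorem hm_mem {u v : H} (hu : u ∈ supp Pos) (hv : v ∈ supp Pos) : hm u v ∈ supp Pos := by
  have hpre (k : ℕ) (hk : 1 ≤ k) (w : H) (hw : w ∈ supp Pos) : pre k w ∈ supp Pos :=
    map_mem (pre k) (fun l hl => by rw [pre_wd]; exact single_mem (pos_cons.2 ⟨hk, hl⟩)) hw
  have key (u v : List ℕ) (hu : Pos u) (hv : Pos v) : hm (wd u) (wd v) ∈ supp Pos := by
    induction u generalizing v with
    | nil => simpa using single_mem hv
    | cons a u ihu =>
      induction v with
      | nil => simpa using single_mem hu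
      | cons b v ihv =>
        obtain ⟨ha, hu'⟩ := pos_cons.1 hu
        obtain ⟨hb, hv'⟩ := pos_cons.1 hv
        rw [wd_cons, wd_cons, hm_pre, ← wd_cons, ← wd_cons]
        exact add_mem (add_mem (hpre a ha _ (ihu _ hu' hv)) (hpre b hb _ (ihv hv')))
          (hpre _ (by omega) _ (ihu _ hu' hv'))
  refine map_mem (hm.flip v) (fun a ha => ?_) hu
  exact map_mem (hm (wd a)) (fun b hb => key a b ha hb) hv

theorem dH_eq_dz {w : H} (hw : w ∈ supp Pos) : dH w = dz w :=
  ext_on dH dz (fun u hu => by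
    rw [dH, LinearMap.comp_apply, LinearMap.comp_apply, X_wd, F_dB u hu]) hw

/-- A linear map satisfying the Leibniz rule on words satisfies it on `𝔥¹`. -/
theorem leibniz_ext (D : H →ₗ[ℚ] H)
    (h : ∀ u v, Pos u → Pos v →
      D (hm (wd u) (wd v)) = hm (D (wd u)) (wd v) + hm (wd u) (D (wd v)))
    {u v : H} (hu : u ∈ supp Pos) (hv : v ∈ supp Pos) :
    D (hm u v) = hm (D u) v + hm u (D v) :=
  ext_on (D ∘ₗ hm.flip v) (hm.flip v ∘ₗ D + hm.flip (D v)) (fun a ha =>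
    ext_on (D ∘ₗ hm (wd a)) (hm (D (wd a)) + hm (wd a) ∘ₗ D) (fun b hb => h a b ha hb) hv) hu

/-- `δ` is a derivation of `(𝔥¹, *)`. -/
theorem dH_hm {u v : H} (hu : u ∈ supp Pos) (hv : v ∈ supp Pos) :
    dH (hm u v) = hm (dH u) v + hm u (dH v) := by
  rw [dH_eq_dz hu, dH_eq_dz hv, dH_eq_dz (hm_mem hu hv)]
  exact leibniz_ext dz dz_hm hu hv

/-- The weight operator, as a linear map. -/
def wt : H →ₗ[ℚ] H := Finsupp.linearCombination ℚ fun u => (u.sum : ℚ) • wd u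

theorem wt_wd (u : List ℕ) : wt (wd u) = (u.sum : ℚ) • wd u := by simp [wt]

theorem wt_pre (k : ℕ) (w : H) : wt (pre k w) = pre k (wt w) + (k : ℚ) • pre k w := by
  refine ext_all (wt ∘ₗ pre k) (pre k ∘ₗ wt + (k : ℚ) • pre k) (fun l => ?_) w
  simp only [LinearMap.comp_apply, LinearMap.add_apply, LinearMap.smul_apply, pre_wd, wt_wd,
    map_smul, List.sum_cons, Nat.cast_add]
  module

theorem wt_hm_wd (u v : List ℕ) :
    wt (hm (wd u) (wd v)) = hm (wt (wd u)) (wd v) + hm (wd u) (wt (wd v)) := by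
  induction u generalizing v with
  | nil => simp [wt_wd]
  | cons a u ihu =>
    induction v with
    | nil => simp [wt_wd]
    | cons b v ihv =>
      have h1 := ihu (b :: v)
      have h3 := ihu v
      rw [wd_cons] at h1 ihv
      rw [wd_cons, wd_cons]
      simp only [hm_pre, map_add, wt_pre, h1, ihv, h3, LinearMap.add_apply, map_smul,
        LinearMap.smul_apply, Nat.cast_add]
      module

theorem wt_hm {u v : H} (hu : u ∈ supp Pos) (hv : v ∈ supp Pos) :
    wt (hm u v) = hm (wt u) v + hm u (wt v) :=
  leibniz_ext wt (fun u v _ _ => wt_hm_wd u v) hu hv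

/-- The map `φ` as a linear map. -/
def ph : H →ₗ[ℚ] H := hm.flip (zw [2]) - s2

theorem phi_eq (w : H) : phi w = ph w := by rw [phi, shmul_eq, hmul_eq]; rfl

theorem pos_two : Pos [2] := by simp [Pos]

theorem ph_mem {w : H} (hw : w ∈ supp Pos) : ph w ∈ supp Pos :=
  sub_mem (hm_mem hw (single_mem pos_two)) (F_mem _)

/-- The relation `[δ, φ] = W`, where `W` multiplies a word by its weight. -/
theorem dH_ph {w : H} (hw : w ∈ supp Pos) : dH (ph w) = ph (dH w) + wt w := by
  refine ext_on (dH ∘ₗ ph) (ph ∘ₗ dH + wt) (fun u hu => ?_) hw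
  have hz : dH (zw [2]) = -(1/2 : ℚ) • wd [] := by
    have : (zw [2] : H) = pre 2 (wd []) := (pre_wd _ _).symm
    rw [dH_eq_dz (w := zw [2]) (single_mem pos_two), this]
    simp [dz, rho_pre, hd]
  have h1 : dH (hm (wd u) (zw [2])) = _ := dH_hm (single_mem hu) (single_mem pos_two)
  change dH (hm (wd u) (zw [2]) - s2 (wd u)) =
    hm (dH (wd u)) (zw [2]) - s2 (dH (wd u)) + wt (wd u)
  rw [map_sub, h1, dH_s2 u hu, wt_wd]
  change hm (dH (wd u)) (zw [2]) + hm (wd u) (dH (zw [2])) - _ = _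
  rw [hz, map_smul, hm_nil_right]
  module

theorem Rop_eq (u v : H) : Rop u v = ph (hm u v) - hm (ph u) v - hm u (ph v) := by
  simp only [Rop, hmul_eq, phi_eq]

end DeltaR

/-- `δ(R(u,v)) = R(δ(u),v) + R(u,δ(v))` for all `u, v ∈ 𝔥¹`. -/
theorem stmt4 (u v : H) (hu : isH1 u) (hv : isH1 v) :
    deltaH (Rop u v) = Rop (deltaH u) v + Rop u (deltaH v) := by
  have hu' : u ∈ DeltaR.supp DeltaR.Pos := fun a ha => hu a ha
  have hv' : v ∈ DeltaR.supp DeltaR.Pos := fun a ha => hv a ha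
  have hdu : DeltaR.dH u ∈ DeltaR.supp DeltaR.Pos := DeltaR.F_mem _
  have hdv : DeltaR.dH v ∈ DeltaR.supp DeltaR.Pos := DeltaR.F_mem _
  simp only [DeltaR.deltaH_eq, DeltaR.Rop_eq, map_sub, map_add, LinearMap.add_apply,
    DeltaR.dH_ph (DeltaR.hm_mem hu' hv'), DeltaR.dH_hm hu' hv', DeltaR.wt_hm hu' hv',
    DeltaR.dH_hm (DeltaR.ph_mem hu') hv', DeltaR.dH_hm hu' (DeltaR.ph_mem hv'),
    DeltaR.dH_ph hu', DeltaR.dH_ph hv']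
  abel
end
end

section
/- For all integers r, i, j with 2 ≤ j ≤ i ≤ r one has 𝒟(z₂^{j−1} z₁ z₂^{i−j} z₃ z₂^{r−i}) = z₂^{i−j} z₃ z₂^{j−2} z₃ z₂^{r−i} + z₂^{i−j} z₃ z₂^{r−i} z₃ z₂^{j−2} + z₂^{r+1}, where powers denote repeated concatenation of letters and z₂⁰ = 1. -/
/-!
The word `z₂^{j−1} z₁ z₂^{i−j} z₃ z₂^{r−i}` has run-length tuple
`𝐜 = (1^{2a+1}, 2, 1^{2b}, 2, 1^{2c+1})` with `a = j - 2`, `b = i - j`, `c = r - i`, so the claim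
is a formula for `𝔇` at this tuple. The proof has three ingredients.

* Moving the first two sums of the recursion to the left turns it into
  `Σ^{eo} ± x^{#A+#B} 𝔇(…) + Σ^{eo} ± x^{#A+#B−1} y 𝔇(…) = Σ^{oe} ± x^{#A+#B−1} y 𝔇(…)`,
  where `Σ^{eo}` and `Σ^{oe}` run over even–odd and odd–even selections and the last two sums carry
  the condition `#A + #B ≥ 2` (`DropD_rec`). Reading a tuple from left to right gives recursive
  descriptions `SE`, `SO` of the two kinds of selections (`SE_eq`, `SO_eq`).
* In a block of `a` pairs `(1, 1)` a selection deletes some of the pairs; the resulting binomial sum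
  is the operator `L a`. The sums `Σ^{eo}` and `Σ^{oe}` of `y`-terms for the tuples considered agree
  except for a few extra terms on the odd–even side, so after cancellation the recursion says that
  nested operators `L` annihilate `x^n F`, where `F` is an explicit combination of values of `𝔇`.
  Since `L a` is unitriangular, `F = 0` (`vanish_one`, `vanish_two`, `vanish_three`).
* The tuples reached from `𝐜` are `P_m = (1^{2m})`, `Q_{a,b} = (1^{2a}, 2, 1^{2b+1})`,
  `R_{a,b} = (1^{2a+1}, 2, 1^{2b})` and `S_{a,b,c} = 𝐜`. The relations `F = 0` read
  `𝔇(P_{m+1}) = xy 𝔇(P_m)`, `𝔇(Q_{a+1,b}) = xy 𝔇(Q_{a,b})`, `𝔇(Q_{0,b}) = x 𝔇(P_{b+1})`,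
  `𝔇(R_{a,b+1}) = xy 𝔇(R_{a,b})`, `𝔇(R_{a,0}) = x 𝔇(P_{a+1})`,
  `𝔇(S_{a,b+1,c}) = xy 𝔇(S_{a,b,c})` and
  `𝔇(S_{a,0,c}) = x 𝔇(Q_{a+1,c}) + x 𝔇(R_{a,c+1}) + xy 𝔇(P_{a+c+2})`,
  from which the three words of the theorem are read off (`DropD_S_eq`).
-/

open scoped Classical BigOperators

noncomputable section

section SelectionSums

/-! ### Selections of positions, entry by entry -/

/-- The index set of a tuple `p :: t` determined by an index set `A` of `t`: positions are shifted
up by one, and position `1` (the entry `p`) is included exactly when `e` is true. -/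
def extS (e : Bool) (A : Finset ℕ) : Finset ℕ :=
  if e then insert 1 (A.map (addRightEmbedding 1)) else A.map (addRightEmbedding 1)

theorem zero_notMem_extS (e : Bool) (A : Finset ℕ) : 0 ∉ extS e A := by
  cases e <;> simp [extS]

theorem one_mem_extS {A : Finset ℕ} (h : 0 ∉ A) (e : Bool) : 1 ∈ extS e A ↔ e = true := by
  cases e <;> simp [extS, h]

theorem add_two_mem_extS (e : Bool) (A : Finset ℕ) (i : ℕ) : i + 2 ∈ extS e A ↔ i + 1 ∈ A := by
  cases e <;> simp [extS]

theorem card_extS {A : Finset ℕ} (h : 0 ∉ A) (e : Bool) :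
    (extS e A).card = A.card + e.toNat := by
  cases e <;> simp [extS, h]

theorem sum_powerset_Icc_succ {M : Type*} [AddCommMonoid M] (n : ℕ) (f : Finset ℕ → M) :
    ∑ A ∈ (Finset.Icc 1 (n + 1)).powerset, f A =
      ∑ A ∈ (Finset.Icc 1 n).powerset, (f (extS false A) + f (extS true A)) := by
  have h1 : Finset.Icc 1 (n + 1) = insert 1 ((Finset.Icc 1 n).map (addRightEmbedding 1)) := by
    ext i
    simp only [Finset.mem_Icc, Finset.mem_insert, Finset.mem_map, addRightEmbedding_apply]
    constructor
    · rintro ⟨h, h'⟩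
      rcases Nat.eq_or_lt_of_le h with h | h
      · exact Or.inl h.symm
      · exact Or.inr ⟨i - 1, by omega, by omega⟩
    · rintro (h | ⟨a, h, rfl⟩) <;> omega
  have h2 : (1 : ℕ) ∉ (Finset.Icc 1 n).map (addRightEmbedding 1) := by simp
  have h3 : ∀ g : Finset ℕ → M, ∑ A ∈ ((Finset.Icc 1 n).map (addRightEmbedding 1)).powerset, g A =
      ∑ A ∈ (Finset.Icc 1 n).powerset, g (A.map (addRightEmbedding 1)) := by
    intro g
    rw [Finset.map_eq_image, Finset.powerset_image, Finset.sum_image]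
    · simp [Finset.map_eq_image]
    · intro a _ b _ hab
      exact Finset.image_injective (addRightEmbedding 1).injective hab
  rw [h1, Finset.sum_powerset_insert h2, h3, h3, ← Finset.sum_add_distrib]
  simp [extS]

/-- The tuple `𝐜_{(−A)} − δ_B`. -/
def newc (c : List ℕ) (A B : Finset ℕ) : List ℕ :=
  (List.range c.length).filterMap fun j =>
    if j + 1 ∈ A then none else some (c.getD j 0 - if j + 1 ∈ B then 1 else 0)

theorem newc_cons {A B : Finset ℕ} (hA : 0 ∉ A) (hB : 0 ∉ B) (p : ℕ) (t : List ℕ) (e f : Bool) :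
    newc (p :: t) (extS e A) (extS f B) =
      (if e then [] else [p - f.toNat]) ++ newc t A B := by
  unfold newc
  rw [List.length_cons, List.range_succ_eq_map, List.filterMap_cons, List.filterMap_map]
  have : (((fun j => if j + 1 ∈ extS e A then none else
      some ((p :: t).getD j 0 - if j + 1 ∈ extS f B then 1 else 0)) : ℕ → Option ℕ) ∘ Nat.succ) =
      fun j => if j + 1 ∈ A then none else some (t.getD j 0 - if j + 1 ∈ B then 1 else 0) := by
    funext j
    simp [add_two_mem_extS]
  rw [this]
  cases e <;> cases f <;> simp [one_mem_extS, hA, hB]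

/-- `A ⊆ [n]¹_𝐜`, apart from the bound on positions: all entries at positions in `A` equal `1`. -/
def onA (c : List ℕ) (A : Finset ℕ) : Prop := ∀ j, j + 1 ∈ A → c.getD j 0 = 1

/-- `B ⊆ [n]^{>1}_𝐜`, apart from the bound on positions: all entries at positions in `B` exceed `1`. -/
def onB (c : List ℕ) (B : Finset ℕ) : Prop := ∀ j, j + 1 ∈ B → 1 < c.getD j 0

/-- `A` is odd–even: a union of pairs of positions `{2l - 1, 2l}` (stated with `l + 1` for `l`). -/
def oeA (A : Finset ℕ) : Prop := ∀ l, (2 * l + 1 ∈ A ↔ 2 * l + 2 ∈ A)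

/-- `A` is even–odd: a union of pairs of positions `{2l, 2l + 1}`, `l ≥ 1`; position `1` has no
partner. -/
def eoA (A : Finset ℕ) : Prop := 1 ∉ A ∧ ∀ l, (2 * l + 2 ∈ A ↔ 2 * l + 3 ∈ A)

/-- `B` contains no pair of positions `{2l - 1, 2l}`. -/
def oeB (B : Finset ℕ) : Prop := ∀ l, ¬(2 * l + 1 ∈ B ∧ 2 * l + 2 ∈ B)

/-- `B` contains no pair of positions `{2l, 2l + 1}`. -/
def eoB (B : Finset ℕ) : Prop := ∀ l, ¬(2 * l + 2 ∈ B ∧ 2 * l + 3 ∈ B)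

theorem onA_cons {A : Finset ℕ} (hA : 0 ∉ A) (p : ℕ) (t : List ℕ) (e : Bool) :
    onA (p :: t) (extS e A) ↔ (e = true → p = 1) ∧ onA t A := by
  unfold onA
  rw [← Nat.and_forall_add_one]
  simp [one_mem_extS hA, add_two_mem_extS]

theorem onB_cons {B : Finset ℕ} (hB : 0 ∉ B) (p : ℕ) (t : List ℕ) (e : Bool) :
    onB (p :: t) (extS e B) ↔ (e = true → 1 < p) ∧ onB t B := by
  unfold onB
  rw [← Nat.and_forall_add_one]
  simp [one_mem_extS hB, add_two_mem_extS]

theorem odd_mem_extS (e e' : Bool) (A : Finset ℕ) (l : ℕ) :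
    2 * (l + 1) + 1 ∈ extS e (extS e' A) ↔ 2 * l + 1 ∈ A := by
  rw [show 2 * (l + 1) + 1 = 2 * l + 1 + 2 by ring, add_two_mem_extS, add_assoc, add_two_mem_extS]

theorem even_mem_extS (e e' : Bool) (A : Finset ℕ) (l : ℕ) :
    2 * (l + 1) + 2 ∈ extS e (extS e' A) ↔ 2 * l + 2 ∈ A :=
  (add_two_mem_extS e (extS e' A) (2 * l + 2)).trans (add_two_mem_extS e' A (2 * l + 1))

theorem two_mem_extS {A : Finset ℕ} (hA : 0 ∉ A) (e e' : Bool) :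
    2 ∈ extS e (extS e' A) ↔ e' = true :=
  (add_two_mem_extS e (extS e' A) 0).trans (one_mem_extS hA e')

theorem oeA_ext {A : Finset ℕ} (hA : 0 ∉ A) (e e' : Bool) :
    oeA (extS e (extS e' A)) ↔ e = e' ∧ oeA A := by
  unfold oeA
  rw [← Nat.and_forall_add_one]
  simp only [odd_mem_extS, even_mem_extS, mul_zero, zero_add, two_mem_extS hA,
    one_mem_extS (zero_notMem_extS e' A)]
  cases e <;> cases e' <;> simp

theorem oeB_ext {A : Finset ℕ} (hA : 0 ∉ A) (e e' : Bool) :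
    oeB (extS e (extS e' A)) ↔ ¬ (e = true ∧ e' = true) ∧ oeB A := by
  unfold oeB
  rw [← Nat.and_forall_add_one]
  simp only [odd_mem_extS, even_mem_extS, mul_zero, zero_add, two_mem_extS hA,
    one_mem_extS (zero_notMem_extS e' A)]

theorem eoA_ext {A : Finset ℕ} (hA : 0 ∉ A) (e : Bool) :
    eoA (extS e A) ↔ e = false ∧ oeA A := by
  unfold eoA oeA
  simp [one_mem_extS hA, add_two_mem_extS]

theorem eoB_ext (A : Finset ℕ) (e : Bool) :
    eoB (extS e A) ↔ oeB A := by
  unfold eoB oeB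
  simp [add_two_mem_extS]

variable {M : Type*} [AddCommMonoid M]

/-- The sum of `g(#A, #B, 𝐜_{(−A)} − δ_B)` over all admissible `A ⊆ [n]¹_𝐜` and `B ⊆ [n]^{>1}_𝐜`
satisfying the constraints `rA` and `rB`. -/
def selSum (rA rB : Finset ℕ → Prop) (c : List ℕ) (g : ℕ → ℕ → List ℕ → M) : M :=
  ∑ A ∈ (Finset.Icc 1 c.length).powerset, ∑ B ∈ (Finset.Icc 1 c.length).powerset,
    if (onA c A ∧ rA A) ∧ (onB c B ∧ rB B) then g A.card B.card (newc c A B) else 0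

/-- The sum of `g(#A, #B, 𝐜_{(−A)} − δ_B)` over odd–even `A` and over `B` without odd–even pairs,
computed pair by pair: a pair `(p, q)` of consecutive entries is kept, deleted (when it is `(1, 1)`),
or has one of its entries decreased (when that entry exceeds `1`); a last
entry without partner is kept or decreased. -/
def SO : List ℕ → (ℕ → ℕ → List ℕ → M) → M
  | [], g => g 0 0 []
  | [q], g => g 0 0 [q] + if 1 < q then g 0 1 [q - 1] else 0
  | p :: q :: t, g =>
      SO t (fun a b l => g a b (p :: q :: l)) +
      (if p = 1 ∧ q = 1 then SO t (fun a b l => g (a + 2) b l) else 0) +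
      (if 1 < p then SO t (fun a b l => g a (b + 1) ((p - 1) :: q :: l)) else 0) +
      (if 1 < q then SO t (fun a b l => g a (b + 1) (p :: (q - 1) :: l)) else 0)

/-- The sum of `g(#A, #B, 𝐜_{(−A)} − δ_B)` over even–odd `A` and over `B` without even–odd pairs, for
`𝐜 = p :: t`: the first entry is never deleted, and the other entries are grouped as in `SO`. -/
def SE (p : ℕ) (t : List ℕ) (g : ℕ → ℕ → List ℕ → M) : M :=
  SO t (fun a b l => g a b (p :: l)) +
  if 1 < p then SO t (fun a b l => g a (b + 1) ((p - 1) :: l)) else 0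

theorem notMem_of_powerset {n : ℕ} {A : Finset ℕ} (h : A ∈ (Finset.Icc 1 n).powerset) : 0 ∉ A := by
  intro h0
  simpa using Finset.mem_powerset.1 h h0

/-- Splits the sum according to the fate of the first entry: kept, decreased or deleted. -/
theorem selSum_cons (rA rB : Finset ℕ → Prop) (p : ℕ) (t : List ℕ) (g : ℕ → ℕ → List ℕ → M) :
    selSum rA rB (p :: t) g =
      selSum (fun A => rA (extS false A)) (fun B => rB (extS false B)) t
        (fun a b l => g a b (p :: l)) +
      (if 1 < p then selSum (fun A => rA (extS false A)) (fun B => rB (extS true B)) t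
        (fun a b l => g a (b + 1) ((p - 1) :: l)) else 0) +
      (if p = 1 then selSum (fun A => rA (extS true A)) (fun B => rB (extS false B)) t
        (fun a b l => g (a + 1) b l) else 0) := by
  have key : ∀ e f : Bool,
      (∑ A ∈ (Finset.Icc 1 t.length).powerset, ∑ B ∈ (Finset.Icc 1 t.length).powerset,
        if (onA (p :: t) (extS e A) ∧ rA (extS e A)) ∧ (onB (p :: t) (extS f B) ∧ rB (extS f B))
        then g (extS e A).card (extS f B).card (newc (p :: t) (extS e A) (extS f B)) else 0) =
      if (e = true → p = 1) ∧ (f = true → 1 < p) then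
        selSum (fun A => rA (extS e A)) (fun B => rB (extS f B)) t
          (fun a b l => g (a + e.toNat) (b + f.toNat) ((if e then [] else [p - f.toNat]) ++ l))
      else 0 := by
    intro e f
    by_cases h : (e = true → p = 1) ∧ (f = true → 1 < p)
    · rw [if_pos h]
      unfold selSum
      refine Finset.sum_congr rfl fun A hA => Finset.sum_congr rfl fun B hB => ?_
      have hA := notMem_of_powerset hA
      have hB := notMem_of_powerset hB
      simp only [onA_cons hA, onB_cons hB, card_extS hA, card_extS hB, newc_cons hA hB,
        and_iff_right h.1, and_iff_right h.2]
    · rw [if_neg h]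
      refine Finset.sum_eq_zero fun A hA => Finset.sum_eq_zero fun B hB => ?_
      have hA := notMem_of_powerset hA
      have hB := notMem_of_powerset hB
      rw [if_neg]
      rw [onA_cons hA, onB_cons hB]
      tauto
  rw [selSum]
  simp only [List.length_cons, sum_powerset_Icc_succ, Finset.sum_add_distrib]
  rw [key, key, key, key]
  have : ¬ (p = 1 ∧ 1 < p) := by omega
  simp [this, add_right_comm]

theorem selSum_congr {rA rA' rB rB' : Finset ℕ → Prop} (hA : ∀ A, 0 ∉ A → (rA A ↔ rA' A))
    (hB : ∀ B, 0 ∉ B → (rB B ↔ rB' B)) (c : List ℕ) (g : ℕ → ℕ → List ℕ → M) :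
    selSum rA rB c g = selSum rA' rB' c g := by
  refine Finset.sum_congr rfl fun A h => Finset.sum_congr rfl fun B h' => ?_
  simp only [hA A (notMem_of_powerset h), hB B (notMem_of_powerset h')]

theorem selSum_nil {rA rB : Finset ℕ → Prop} (hA : rA ∅) (hB : rB ∅) (g : ℕ → ℕ → List ℕ → M) :
    selSum rA rB [] g = g 0 0 [] := by
  simp [selSum, onA, onB, newc, hA, hB]

theorem SO_eq : ∀ (c : List ℕ) (g : ℕ → ℕ → List ℕ → M), selSum oeA oeB c g = SO c g
  | [], g => by
    rw [selSum_nil, SO]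
    · simp [oeA]
    · simp [oeB]
  | [q], g => by
    have h : ∀ e, oeA (extS e ∅) ↔ e = false := by
      intro e
      constructor
      · intro h
        have := h 0
        cases e <;> simp_all [extS]
      · rintro rfl
        simp [extS, oeA]
    have h' : ∀ e, oeB (extS e ∅) := by
      intro e l
      cases e <;> simp [extS]
    rw [selSum_cons, selSum_nil (by simp [h]) (h' _), selSum_nil (by simp [h]) (h' _), SO]
    simp [selSum, h, onA]
  | p :: q :: t, g => by
    have h : ∀ (e e' f f' : Bool) (g : ℕ → ℕ → List ℕ → M),
        selSum (fun A => oeA (extS e (extS e' A))) (fun B => oeB (extS f (extS f' B))) t g =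
        if e = e' ∧ ¬(f = true ∧ f' = true) then SO t g else 0 := by
      intro e e' f f' g
      split_ifs with h
      · rw [← SO_eq t]
        refine selSum_congr (fun A hA => ?_) (fun B hB => ?_) t g
        · rw [oeA_ext hA]; exact and_iff_right h.1
        · rw [oeB_ext hB]; exact and_iff_right h.2
      · refine Finset.sum_eq_zero fun A hA => Finset.sum_eq_zero fun B hB => ?_
        have hA := notMem_of_powerset hA
        have hB := notMem_of_powerset hB
        rw [if_neg]
        simp only [oeA_ext hA, oeB_ext hB]
        tauto
    simp only [selSum_cons, h, SO]
    by_cases hp : p = 1 <;> by_cases hq : q = 1 <;> simp [hp, hq, add_assoc] <;> abel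

theorem SE_eq (p : ℕ) (t : List ℕ) (g : ℕ → ℕ → List ℕ → M) :
    selSum eoA eoB (p :: t) g = SE p t g := by
  have h : ∀ (e f : Bool) (g : ℕ → ℕ → List ℕ → M),
      selSum (fun A => eoA (extS e A)) (fun B => eoB (extS f B)) t g =
      if e = false then SO t g else 0 := by
    intro e f g
    split_ifs with h
    · rw [← SO_eq t]
      refine selSum_congr (fun A hA => ?_) (fun B hB => ?_) t g
      · rw [eoA_ext hA]; exact and_iff_right h
      · rw [eoB_ext]
    · refine Finset.sum_eq_zero fun A hA => Finset.sum_eq_zero fun B hB => ?_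
      have hA := notMem_of_powerset hA
      rw [if_neg]
      simp only [eoA_ext hA]
      tauto
  simp [selSum_cons, h, SE]

theorem evenOdd_iff {A : Finset ℕ} (h0 : 0 ∉ A) :
    (∀ i ∈ A, (Even i → i + 1 ∈ A) ∧ (Odd i → i - 1 ∈ A)) ↔ eoA A := by
  constructor
  · intro h
    refine ⟨fun h1 => h0 ((h 1 h1).2 odd_one), fun l => ⟨fun hl => ?_, fun hl => ?_⟩⟩
    · exact (h _ hl).1 ⟨l + 1, by ring⟩
    · exact (h _ hl).2 ⟨l + 1, by ring⟩
  · rintro ⟨h1, h⟩ i hi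
    refine ⟨?_, ?_⟩
    · rintro ⟨l, rfl⟩
      obtain _ | l := l
      · exact absurd hi h0
      · rw [show l + 1 + (l + 1) = 2 * l + 2 by ring] at hi ⊢
        exact (h l).1 hi
    · rintro ⟨l, rfl⟩
      obtain _ | l := l
      · exact absurd hi h1
      · rw [show 2 * (l + 1) + 1 = 2 * l + 3 by ring] at hi ⊢
        exact (h l).2 hi

theorem oddEven_iff {A : Finset ℕ} (h0 : 0 ∉ A) :
    (∀ i ∈ A, (Odd i → i + 1 ∈ A) ∧ (Even i → i - 1 ∈ A)) ↔ oeA A := by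
  constructor
  · intro h
    refine fun l => ⟨fun hl => ?_, fun hl => ?_⟩
    · exact (h _ hl).1 ⟨l, by ring⟩
    · exact (h _ hl).2 ⟨l + 1, by ring⟩
  · intro h i hi
    refine ⟨?_, ?_⟩
    · rintro ⟨l, rfl⟩
      exact (h l).1 hi
    · rintro ⟨l, rfl⟩
      obtain _ | l := l
      · exact absurd hi h0
      · rw [show l + 1 + (l + 1) = 2 * l + 2 by ring] at hi ⊢
        exact (h l).2 hi

theorem noEvenPair_iff (B : Finset ℕ) :
    (∀ l : ℕ, 1 ≤ l → ¬(2 * l ∈ B ∧ 2 * l + 1 ∈ B)) ↔ eoB B :=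
  ⟨fun h l => h (l + 1) (by omega), fun h l hl => by
    obtain ⟨l, rfl⟩ := Nat.exists_eq_add_of_le' hl
    exact h l⟩

theorem noOddPair_iff (B : Finset ℕ) :
    (∀ l : ℕ, 1 ≤ l → ¬(2 * l - 1 ∈ B ∧ 2 * l ∈ B)) ↔ oeB B :=
  ⟨fun h l => h (l + 1) (by omega), fun h l hl => by
    obtain ⟨l, rfl⟩ := Nat.exists_eq_add_of_le' hl
    exact h l⟩

theorem onA_iff {c : List ℕ} {A : Finset ℕ} :
    A ⊆ (Finset.Icc 1 c.length).filter (fun i => c.getD (i - 1) 0 = 1) ↔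
      A ⊆ Finset.Icc 1 c.length ∧ onA c A := by
  constructor
  · intro h
    exact ⟨h.trans (Finset.filter_subset _ _), fun j hj => (Finset.mem_filter.1 (h hj)).2⟩
  · rintro ⟨h, h'⟩ i hi
    have h1 := h hi
    refine Finset.mem_filter.2 ⟨h1, ?_⟩
    obtain ⟨j, rfl⟩ := Nat.exists_eq_add_of_le' (Finset.mem_Icc.1 h1).1
    exact h' j hi

theorem onB_iff {c : List ℕ} {A : Finset ℕ} :
    A ⊆ (Finset.Icc 1 c.length).filter (fun i => 1 < c.getD (i - 1) 0) ↔
      A ⊆ Finset.Icc 1 c.length ∧ onB c A := by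
  constructor
  · intro h
    exact ⟨h.trans (Finset.filter_subset _ _), fun j hj => (Finset.mem_filter.1 (h hj)).2⟩
  · rintro ⟨h, h'⟩ i hi
    have h1 := h hi
    refine Finset.mem_filter.2 ⟨h1, ?_⟩
    obtain ⟨j, rfl⟩ := Nat.exists_eq_add_of_le' (Finset.mem_Icc.1 h1).1
    exact h' j hi

/-- The double sums in the definition of `Dfuel` are instances of `selSum`. -/
theorem sum_eq_selSum {rA rB rA' rB' : Finset ℕ → Prop}
    (hA : ∀ A, 0 ∉ A → (rA' A ↔ rA A)) (hB : ∀ B, rB' B ↔ rB B) (c : List ℕ) (m : ℕ)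
    (g : ℕ → ℕ → List ℕ → M) :
    ∑ A ∈ ((Finset.Icc 1 c.length).filter fun i => c.getD (i - 1) 0 = 1).powerset.filter rA',
      ∑ B ∈ ((Finset.Icc 1 c.length).filter fun i => 1 < c.getD (i - 1) 0).powerset.filter
          (fun B => m ≤ A.card + B.card ∧ rB' B), g A.card B.card (newc c A B) =
      selSum rA rB c (fun a b l => if m ≤ a + b then g a b l else 0) := by
  have h1 : ((Finset.Icc 1 c.length).filter fun i => c.getD (i - 1) 0 = 1).powerset.filter rA' =
      (Finset.Icc 1 c.length).powerset.filter fun A => onA c A ∧ rA A := by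
    ext A
    simp only [Finset.mem_filter, Finset.mem_powerset, onA_iff]
    constructor
    · rintro ⟨⟨h, h'⟩, h''⟩
      exact ⟨h, h', (hA A (notMem_of_powerset (Finset.mem_powerset.2 h))).1 h''⟩
    · rintro ⟨h, h', h''⟩
      exact ⟨⟨h, h'⟩, (hA A (notMem_of_powerset (Finset.mem_powerset.2 h))).2 h''⟩
  have h2 : ∀ a, ((Finset.Icc 1 c.length).filter fun i => 1 < c.getD (i - 1) 0).powerset.filter
          (fun B => m ≤ a + B.card ∧ rB' B) =
      (Finset.Icc 1 c.length).powerset.filter fun B => (onB c B ∧ rB B) ∧ m ≤ a + B.card := by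
    intro a
    ext B
    simp only [Finset.mem_filter, Finset.mem_powerset, onB_iff, hB]
    tauto
  simp only [h1, h2, Finset.sum_filter]
  refine Finset.sum_congr rfl fun A _ => ?_
  split_ifs with h
  · refine Finset.sum_congr rfl fun B _ => ?_
    by_cases hB : onB c B ∧ rB B <;> simp [h, hB]
  · simp [h]

/-! ### The recursion for `𝔇` in symmetric form -/

/-- Left multiplication by `x`. -/
def X : Module.End ℚ Bw := Finsupp.lmapDomain ℚ ℚ (false :: ·)

/-- Left multiplication by `y`. -/
def Y : Module.End ℚ Bw := Finsupp.lmapDomain ℚ ℚ (true :: ·)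

theorem mapDomain_replicate (n : ℕ) (u : Bw) :
    Finsupp.mapDomain (fun w => List.replicate n false ++ w) u = (X ^ n) u := by
  induction n with
  | zero => simp [← Function.id_def]
  | succ n ih =>
    rw [pow_succ', Module.End.mul_apply, ← ih, X, Finsupp.lmapDomain_apply,
      ← Finsupp.mapDomain_comp]
    rfl

theorem mapDomain_replicate_true (n : ℕ) (u : Bw) :
    Finsupp.mapDomain (fun w => List.replicate n false ++ true :: w) u = (X ^ n) (Y u) := by
  rw [← mapDomain_replicate, Y, Finsupp.lmapDomain_apply, ← Finsupp.mapDomain_comp]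
  rfl

/-- The summand `(−1)^{#B} x^{#A+#B−1} y D(𝐜_{(−A)} − δ_B)`, with `a = #A`, `b = #B` and
`l = 𝐜_{(−A)} − δ_B`; it is zero unless `#A + #B ≥ 2`. -/
def yTerm (D : List ℕ → Bw) (a b : ℕ) (l : List ℕ) : Bw :=
  if 2 ≤ a + b then (-1 : ℚ) ^ b • (X ^ (a + b - 1)) (Y (D l)) else 0

/-- The summand `(−1)^{#B} x^{#A+#B} D(𝐜_{(−A)} − δ_B)`, with `a = #A`, `b = #B` and
`l = 𝐜_{(−A)} − δ_B`. There is no lower bound on `#A + #B`: the term `A = B = ∅` is `D(𝐜)`. -/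
def xTerm (D : List ℕ → Bw) (a b : ℕ) (l : List ℕ) : Bw :=
  (-1 : ℚ) ^ b • (X ^ (a + b)) (D l)

theorem Dfuel_succ (f k : ℕ) (t : List ℕ) :
    Dfuel (f + 1) (k :: t) =
      SE k t (fun a b l => if 1 ≤ a + b then - xTerm (Dfuel f) a b l else 0) +
      SE k t (fun a b l => - yTerm (Dfuel f) a b l) + SO (k :: t) (yTerm (Dfuel f)) := by
  have e1 := sum_eq_selSum (M := Bw) (fun _ => evenOdd_iff) noEvenPair_iff (k :: t) 1
    (fun a b l => (-1 : ℚ) ^ (b + 1) • Finsupp.mapDomain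
      (fun w => List.replicate (a + b) false ++ w) (Dfuel f l))
  have e2 := sum_eq_selSum (M := Bw) (fun _ => evenOdd_iff) noEvenPair_iff (k :: t) 2
    (fun a b l => (-1 : ℚ) ^ (b + 1) • Finsupp.mapDomain
      (fun w => List.replicate (a + b - 1) false ++ true :: w) (Dfuel f l))
  have e3 := sum_eq_selSum (M := Bw) (fun _ => oddEven_iff) noOddPair_iff (k :: t) 2
    (fun a b l => (-1 : ℚ) ^ b • Finsupp.mapDomain
      (fun w => List.replicate (a + b - 1) false ++ true :: w) (Dfuel f l))
  have e := congrArg₂ (· + ·) (congrArg₂ (· + ·) e1 e2) e3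
  rw [Dfuel]
  refine Eq.trans ?_ (e.trans ?_)
  · clear e e1 e2 e3
    unfold newc
    simp only []
    refine congrArg₂ (· + ·) (congrArg₂ (· + ·) ?_ ?_) ?_ <;> congr!
  rw [SE_eq, SE_eq, SO_eq]
  simp only [mapDomain_replicate, mapDomain_replicate_true, xTerm, pow_succ, mul_neg, mul_one,
    neg_smul]
  congr 2
  congr 1
  funext a b l
  rw [yTerm]
  split_ifs <;> simp

/-- Only the values of `g` on tuples arising from `𝐜` matter; for these the number of deletions and
of decreases accounts exactly for the drop in the sum of the entries. -/
theorem SO_congr : ∀ (c : List ℕ) {g g' : ℕ → ℕ → List ℕ → M},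
    (∀ a b l, a + b + l.sum = c.sum → g a b l = g' a b l) → SO c g = SO c g'
  | [], g, g', h => by simp only [SO]; exact h 0 0 [] (by simp)
  | [q], g, g', h => by
    simp only [SO]
    rw [h 0 0 [q] (by simp)]
    split_ifs with hq
    · rw [h 0 1 [q - 1] (by simp; omega)]
    · rfl
  | p :: q :: t, g, g', h => by
    simp only [SO]
    congr 1
    · congr 1
      · congr 1
        · exact SO_congr t fun a b l hl => h _ _ _ (by simp; omega)
        · split_ifs with hp
          · exact SO_congr t fun a b l hl => h _ _ _ (by simp; omega)
          · rfl
      · split_ifs with hp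
        · exact SO_congr t fun a b l hl => h _ _ _ (by simp; omega)
        · rfl
    · split_ifs with hp
      · exact SO_congr t fun a b l hl => h _ _ _ (by simp; omega)
      · rfl

theorem SE_congr (p : ℕ) (t : List ℕ) {g g' : ℕ → ℕ → List ℕ → M}
    (h : ∀ a b l, a + b + l.sum = p + t.sum → g a b l = g' a b l) : SE p t g = SE p t g' := by
  unfold SE
  congr 1
  · exact SO_congr t fun a b l hl => h _ _ _ (by simp; omega)
  · split_ifs with hp
    · exact SO_congr t fun a b l hl => h _ _ _ (by simp; omega)
    · rfl

theorem SO_add : ∀ (c : List ℕ) (g g' : ℕ → ℕ → List ℕ → M),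
    SO c (fun a b l => g a b l + g' a b l) = SO c g + SO c g'
  | [], g, g' => rfl
  | [q], g, g' => by
    simp only [SO]
    split_ifs <;> abel
  | p :: q :: t, g, g' => by
    simp only [SO, SO_add t]
    split_ifs <;> abel

theorem SE_add (p : ℕ) (t : List ℕ) (g g' : ℕ → ℕ → List ℕ → M) :
    SE p t (fun a b l => g a b l + g' a b l) = SE p t g + SE p t g' := by
  simp only [SE, SO_add]
  split_ifs <;> abel

theorem SO_zero : ∀ c : List ℕ, SO c (fun _ _ _ => (0 : M)) = 0
  | [] => rfl
  | [q] => by simp [SO]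
  | p :: q :: t => by simp [SO, SO_zero t]

/-- Only `A = B = ∅` has `#A + #B = 0`. -/
theorem SO_zeroTerm : ∀ (c : List ℕ) (h : List ℕ → M),
    SO c (fun a b l => if a + b = 0 then h l else 0) = h c
  | [], h => by simp [SO]
  | [q], h => by simp [SO]
  | p :: q :: t, h => by
    have h1 := SO_zeroTerm t (fun l => h (p :: q :: l))
    simp only [SO, h1]
    simp [SO_zero]

theorem SE_zeroTerm (p : ℕ) (t : List ℕ) (h : List ℕ → M) :
    SE p t (fun a b l => if a + b = 0 then h l else 0) = h (p :: t) := by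
  have h1 := SO_zeroTerm t (fun l => h (p :: l))
  simp only [SE, h1]
  simp [SO_zero]

theorem Dfuel_stable (f : ℕ) : ∀ c : List ℕ, c.sum < f → Dfuel (f + 1) c = Dfuel f c := by
  induction f with
  | zero => intro c h; omega
  | succ f ih =>
    rintro (_ | ⟨k, t⟩) h
    · rfl
    · rw [List.sum_cons] at h
      have e : ∀ {a b : ℕ} {l : List ℕ}, a + b + l.sum = k + t.sum → 1 ≤ a + b →
          Dfuel (f + 1) l = Dfuel f l := fun h1 h2 => ih _ (by omega)
      rw [Dfuel_succ, Dfuel_succ]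
      refine congrArg₂ (· + ·) (congrArg₂ (· + ·) ?_ ?_) ?_
      · refine SE_congr k t fun a b l hl => ?_
        split_ifs with hab
        · rw [xTerm, xTerm, e hl hab]
        · rfl
      · refine SE_congr k t fun a b l hl => ?_
        unfold yTerm
        split_ifs with hab
        · rw [e hl (by omega)]
        · rfl
      · refine SO_congr (k :: t) fun a b l hl => ?_
        unfold yTerm
        split_ifs with hab
        · rw [e hl (by omega)]
        · rfl

theorem Dfuel_eq_DropD {f : ℕ} {c : List ℕ} (h : c.sum < f) : Dfuel f c = DropD c := by
  induction f, (Nat.succ_le_of_lt h) using Nat.le_induction with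
  | base => rfl
  | succ n hn ih => rw [Dfuel_stable n c hn, ih hn]

/-- The recursion for `𝔇` in symmetric form, obtained by moving the first two sums to the left-hand
side, where `𝔇(𝐜)` becomes the term `A = B = ∅` of the first one. -/
theorem DropD_rec (k : ℕ) (t : List ℕ) :
    SE k t (xTerm DropD) + SE k t (yTerm DropD) = SO (k :: t) (yTerm DropD) := by
  have e : ∀ {a b : ℕ} {l : List ℕ}, a + b + l.sum = k + t.sum → 1 ≤ a + b →
      Dfuel ((k :: t).sum) l = DropD l := fun h1 h2 => Dfuel_eq_DropD (by simp; omega)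
  have h1 : DropD (k :: t) = SE k t (fun a b l => if 1 ≤ a + b then - xTerm DropD a b l else 0) +
      SE k t (fun a b l => - yTerm DropD a b l) + SO (k :: t) (yTerm DropD) := by
    rw [DropD, Dfuel_succ]
    refine congrArg₂ (· + ·) (congrArg₂ (· + ·) ?_ ?_) ?_
    · refine SE_congr k t fun a b l hl => ?_
      split_ifs with hab
      · rw [xTerm, xTerm, e hl hab]
      · rfl
    · refine SE_congr k t fun a b l hl => ?_
      unfold yTerm
      split_ifs with hab
      · rw [e hl (by omega)]
      · rfl
    · refine SO_congr (k :: t) fun a b l hl => ?_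
      unfold yTerm
      split_ifs with hab
      · rw [e hl (by omega)]
      · rfl
  have h2 := SE_zeroTerm k t DropD
  have h3 : SE k t (yTerm DropD) + SE k t (fun a b l => - yTerm DropD a b l) = 0 := by
    rw [← SE_add]
    simp [SE, SO_zero]
  have h4 : SE k t (xTerm DropD) +
      SE k t (fun a b l => if 1 ≤ a + b then - xTerm DropD a b l else 0) =
      SE k t (fun a b l => if a + b = 0 then DropD l else 0) := by
    rw [← SE_add]
    congr 1
    funext a b l
    rcases Nat.eq_zero_or_pos (a + b) with h | h
    · obtain ⟨rfl, rfl⟩ : a = 0 ∧ b = 0 := by omega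
      simp [xTerm]
    · rw [if_pos (Nat.succ_le_of_lt h), if_neg h.ne', add_neg_cancel]
  rw [h2, h1] at h4
  have h5 := eq_neg_of_add_eq_zero_left h3
  rw [h5, ← sub_eq_add_neg, sub_eq_iff_eq_add]
  rw [← sub_eq_zero] at h4 ⊢
  rw [← h4]
  abel

/-! ### Blocks of ones -/

/-- The sum `Σ_k (a choose k) g(2k, a - k)`: in a block of `a` pairs `(1, 1)` any `k` of them are
deleted, which removes `2k` entries and leaves `a - k` pairs. -/
def L : ℕ → (ℕ → ℕ → M) → M
  | 0, g => g 0 0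
  | a + 1, g => L a (fun n m => g n (m + 1)) + L a (fun n m => g (n + 2) m)

theorem L_add : ∀ (a : ℕ) (g g' : ℕ → ℕ → M),
    L a (fun n m => g n m + g' n m) = L a g + L a g'
  | 0, _, _ => rfl
  | a + 1, g, g' => by
    simp only [L, L_add a]
    abel

theorem map_L {N : Type*} [AddCommMonoid N] (f : M →+ N) :
    ∀ (a : ℕ) (g : ℕ → ℕ → M), f (L a g) = L a (fun n m => f (g n m))
  | 0, _ => rfl
  | a + 1, g => by simp only [L, map_add, map_L f a]

theorem L_eq_of_vanish : ∀ (a : ℕ) (g : ℕ → ℕ → M), (∀ n m, m < a → g n m = 0) → L a g = g 0 a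
  | 0, _, _ => rfl
  | a + 1, g, h => by
    rw [L, L_eq_of_vanish a _ fun n m hm => h n (m + 1) (by omega),
      L_eq_of_vanish a _ fun n m hm => h (n + 2) m (by omega), h (0 + 2) a (by omega), add_zero]

/-- The tuple `t` preceded by `n` entries equal to `1`. -/
def rp : ℕ → List ℕ → List ℕ
  | 0, t => t
  | n + 1, t => 1 :: rp n t

theorem rp_cons : ∀ (n : ℕ) (t : List ℕ), rp n (1 :: t) = rp (n + 1) t
  | 0, _ => rfl
  | n + 1, t => congrArg (1 :: ·) (rp_cons n t)

theorem cons_rp (n : ℕ) (t : List ℕ) : 1 :: rp n t = rp (n + 1) t := rfl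

theorem rp_rp (n m : ℕ) (t : List ℕ) : rp n (rp m t) = rp (n + m) t := by
  induction n with
  | zero => rw [zero_add]; rfl
  | succ n ih => rw [Nat.succ_add, rp, rp, ih]

/-- A block of `a` pairs `(1, 1)` contributes through the operator `L a`. -/
theorem SO_rp : ∀ (a : ℕ) (t : List ℕ) (g : ℕ → ℕ → List ℕ → M),
    SO (rp (2 * a) t) g =
      L a (fun n m => SO t (fun n' b l => g (n + n') b (rp (2 * m) l)))
  | 0, t, g => by simp [rp, L]
  | a + 1, t, g => by
    have h : ∀ m s, rp (2 * (m + 1)) s = 1 :: 1 :: rp (2 * m) s := fun _ _ => rfl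
    simp only [h, SO, SO_rp a, L]
    simp [add_right_comm]

/-! ### Selection sums of the four families of tuples -/

/-- The tuple `(1^{2m})`, i.e. the word `z₂^m`. -/
def Pl (m : ℕ) : List ℕ := rp (2 * m) []
/-- The tuple `(1^{2a}, 2, 1^{2b+1})`, i.e. the word `z₂^a z₃ z₂^b`. -/
def Ql (a b : ℕ) : List ℕ := rp (2 * a) (2 :: rp (2 * b + 1) [])
/-- The tuple `(1^{2a+1}, 2, 1^{2b})`, i.e. the word `z₂^{a+1} z₁ z₂^b`. -/
def Rl (a b : ℕ) : List ℕ := rp (2 * a + 1) (2 :: rp (2 * b) [])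
/-- The tuple `(1^{2a+1}, 2, 1^{2b}, 2, 1^{2c+1})`, i.e. the word `z₂^{a+1} z₁ z₂^b z₃ z₂^c`. -/
def Sl (a b c : ℕ) : List ℕ := rp (2 * a + 1) (2 :: rp (2 * b) (2 :: rp (2 * c + 1) []))

theorem SO_P (m : ℕ) (g : ℕ → ℕ → List ℕ → M) :
    SO (Pl (m + 1)) g = L m fun n m => g n 0 (Pl (m + 1)) + g (n + 2) 0 (Pl m) := by
  simp only [Pl, SO_rp, L, SO, ← L_add]
  rfl

theorem SE_P (m : ℕ) (g : ℕ → ℕ → List ℕ → M) :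
    SE 1 (rp (2 * m + 1) []) g = L m fun n m => g n 0 (Pl (m + 1)) := by
  simp only [← rp_cons, SE, SO_rp, SO]
  simp [Pl, rp, rp_cons, mul_add]

theorem SO_Q0 (b : ℕ) (g : ℕ → ℕ → List ℕ → M) :
    SO (Ql 0 b) g = L b fun n b => g n 0 (Ql 0 b) + g n 1 (Pl (b + 1)) := by
  rw [show Ql 0 b = 2 :: 1 :: rp (2 * b) [] from rfl]
  simp [SO_rp, SO, ← L_add]
  rfl

theorem SE_Q0 (b : ℕ) (g : ℕ → ℕ → List ℕ → M) :
    SE 2 (rp (2 * b + 1) []) g = L b fun n b => g n 0 (Ql 0 b) + g n 1 (Pl (b + 1)) := by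
  simp only [← rp_cons, SE, SO_rp, SO]
  simp [Ql, Pl, rp, rp_cons, mul_add, L_add]

theorem SO_Q (a b : ℕ) (g : ℕ → ℕ → List ℕ → M) :
    SO (Ql (a + 1) b) g = L a fun n a => L b fun n' b =>
      (g (n + n') 0 (Ql (a + 1) b) + g (n + n') 1 (Pl (a + b + 2))) +
      (g (n + n' + 2) 0 (Ql a b) + g (n + n' + 2) 1 (Pl (a + b + 1))) := by
  simp only [Ql, ← cons_rp, SO_rp, SO, L]
  simp [← L_add, Pl, cons_rp, rp_rp]
  ring_nf

theorem SE_Q (a b : ℕ) (g : ℕ → ℕ → List ℕ → M) :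
    SE 1 (rp (2 * a + 1) (2 :: rp (2 * b + 1) [])) g = L a fun n a => L b fun n' b =>
      g (n + n') 0 (Ql (a + 1) b) + g (n + n') 1 (Pl (a + b + 2)) := by
  simp only [← rp_cons, SE, SO_rp, SO]
  simp [← L_add, Pl, Ql, cons_rp, rp_cons, rp_rp]
  ring_nf

theorem SO_R0 (a : ℕ) (g : ℕ → ℕ → List ℕ → M) :
    SO (Rl a 0) g = L a fun n a => g n 0 (Rl a 0) + g n 1 (Pl (a + 1)) := by
  rw [show Rl a 0 = rp (2 * a + 1) [2] from rfl, ← rp_cons]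
  simp only [SO_rp, SO]
  simp [rp_cons, Rl, Pl, rp.eq_1, mul_add]

theorem SE_R0 (a : ℕ) (g : ℕ → ℕ → List ℕ → M) :
    SE 1 (rp (2 * a) [2]) g = L a fun n a => g n 0 (Rl a 0) + g n 1 (Pl (a + 1)) := by
  simp only [SE, SO_rp, SO]
  simp [rp_cons, cons_rp, Rl, Pl, rp.eq_1, mul_add, L_add]

theorem SO_R (a b : ℕ) (g : ℕ → ℕ → List ℕ → M) :
    SO (Rl a (b + 1)) g = L a fun n a => L b fun n' b =>
      (g (n + n') 0 (Rl a (b + 1)) + g (n + n') 1 (Pl (a + b + 2))) +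
      (g (n + n' + 2) 0 (Rl a b) + g (n + n' + 2) 1 (Pl (a + b + 1))) := by
  simp only [Rl, ← rp_cons (2 * a), SO_rp, SO, L]
  simp [← L_add, Pl, cons_rp, rp_cons, rp_rp]
  refine congrArg (L a) (funext₂ fun n a => congrArg (L b) (funext₂ fun n' b => ?_))
  ring_nf
  abel

theorem SE_R (a b : ℕ) (g : ℕ → ℕ → List ℕ → M) :
    SE 1 (rp (2 * a) (2 :: rp (2 * (b + 1)) [])) g = L a fun n a => L b fun n' b =>
      g (n + n') 0 (Rl a (b + 1)) + g (n + n') 1 (Pl (a + b + 2)) := by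
  rw [show rp (2 * (b + 1)) [] = 1 :: rp (2 * b + 1) [] from rfl]
  simp only [← rp_cons (2 * b), SE, SO_rp, SO]
  simp [← L_add, Pl, Rl, cons_rp, rp_cons, rp_rp]
  ring_nf

theorem SO_S0 (a c : ℕ) (g : ℕ → ℕ → List ℕ → M) :
    SO (Sl a 0 c) g = L a fun n a => L c fun n' c =>
      (g (n + n') 0 (Sl a 0 c) + g (n + n') 1 (Ql (a + 1) c) + g (n + n') 1 (Rl a (c + 1))) +
      g (n + n') 2 (Pl (a + c + 2)) := by
  rw [show Sl a 0 c = rp (2 * a + 1) (2 :: 2 :: 1 :: rp (2 * c) []) from rfl, ← rp_cons]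
  simp only [SO_rp, SO]
  simp [← L_add, Pl, Ql, Rl, Sl, cons_rp, rp_cons, rp_rp, rp.eq_1]
  refine congrArg (L a) (funext₂ fun n a => congrArg (L c) (funext₂ fun n' c => ?_))
  ring_nf
  abel

theorem SE_S0 (a c : ℕ) (g : ℕ → ℕ → List ℕ → M) :
    SE 1 (rp (2 * a) (2 :: 2 :: rp (2 * c + 1) [])) g = L a fun n a => L c fun n' c =>
      g (n + n') 0 (Sl a 0 c) + g (n + n') 1 (Ql (a + 1) c) + g (n + n') 1 (Rl a (c + 1)) := by
  simp only [← rp_cons (2 * c), SE, SO_rp, SO]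
  simp [← L_add, Ql, Rl, Sl, cons_rp, rp_cons, rp.eq_1]
  ring_nf

theorem SO_S (a b c : ℕ) (g : ℕ → ℕ → List ℕ → M) :
    SO (Sl a (b + 1) c) g = L a fun n a => L b fun n' b => L c fun n'' c =>
      (g (n + n' + n'') 0 (Sl a (b + 1) c) + g (n + n' + n'') 1 (Ql (a + b + 2) c) +
        g (n + n' + n'') 1 (Rl a (b + c + 2)) + g (n + n' + n'') 2 (Pl (a + b + c + 3))) +
      (g (n + n' + n'' + 2) 0 (Sl a b c) + g (n + n' + n'' + 2) 1 (Ql (a + b + 1) c) +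
        g (n + n' + n'' + 2) 1 (Rl a (b + c + 1)) + g (n + n' + n'' + 2) 2 (Pl (a + b + c + 2))) := by
  rw [Sl, ← rp_cons (2 * a), show rp (2 * c + 1) [] = 1 :: rp (2 * c) [] from rfl]
  simp only [SO_rp, SO, L]
  simp [← L_add, Pl, Ql, Rl, Sl, cons_rp, rp_cons, rp_rp]
  refine congrArg (L a) (funext₂ fun n a => congrArg (L b) (funext₂ fun n' b =>
    congrArg (L c) (funext₂ fun n'' c => ?_)))
  ring_nf
  abel

theorem SE_S (a b c : ℕ) (g : ℕ → ℕ → List ℕ → M) :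
    SE 1 (rp (2 * a) (2 :: rp (2 * (b + 1)) (2 :: rp (2 * c + 1) []))) g =
      L a fun n a => L b fun n' b => L c fun n'' c =>
      g (n + n' + n'') 0 (Sl a (b + 1) c) + g (n + n' + n'') 1 (Ql (a + b + 2) c) +
        g (n + n' + n'') 1 (Rl a (b + c + 2)) + g (n + n' + n'') 2 (Pl (a + b + c + 3)) := by
  rw [show rp (2 * (b + 1)) (2 :: rp (2 * c + 1) []) = 1 :: rp (2 * b + 1) (2 :: rp (2 * c + 1) [])
    from rfl]
  simp only [← rp_cons (2 * b), ← rp_cons (2 * c), SE, SO_rp, SO]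
  simp [← L_add, Pl, Ql, Rl, Sl, cons_rp, rp_cons, rp_rp]
  refine congrArg (L a) (funext₂ fun n a => congrArg (L b) (funext₂ fun n' b =>
    congrArg (L c) (funext₂ fun n'' c => ?_)))
  ring_nf
  abel

/-! ### Unitriangularity -/

/-- The operators `L a` are unitriangular in `a`, so they detect vanishing. -/
theorem vanish_one {F : ℕ → Bw} (h : ∀ a, L a (fun n m => (X ^ n) (F m)) = 0) (a : ℕ) :
    F a = 0 := by
  induction a using Nat.strong_induction_on with
  | _ a ih =>
    have := h a
    rwa [L_eq_of_vanish a _ fun n m hm => by rw [ih m hm, map_zero]] at this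

/-- `L a` commutes with multiplication by a power of `x`, since it only takes sums. -/
theorem L_X (a n : ℕ) (g : ℕ → ℕ → Bw) :
    L a (fun n' m => (X ^ n) (g n' m)) = (X ^ n) (L a g) :=
  (map_L (X ^ n : Module.End ℚ Bw).toAddMonoidHom a g).symm

theorem vanish_two {F : ℕ → ℕ → Bw}
    (h : ∀ a b, L a (fun n a => L b fun n' b => (X ^ (n + n')) (F a b)) = 0) (a b : ℕ) :
    F a b = 0 := by
  refine vanish_one (fun b => ?_) b
  refine vanish_one (F := fun a => L b fun n' b => (X ^ n') (F a b)) (fun a => ?_) a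
  simp only [← L_X, ← Module.End.mul_apply, ← pow_add]
  exact h a b

theorem vanish_three {F : ℕ → ℕ → ℕ → Bw}
    (h : ∀ a b c, L a (fun n a => L b fun n' b => L c fun n'' c =>
      (X ^ (n + n' + n'')) (F a b c)) = 0) (a b c : ℕ) :
    F a b c = 0 := by
  refine vanish_two (F := F a) (fun b c => ?_) b c
  refine vanish_one (F := fun a => L b fun n' b => L c fun n'' c => (X ^ (n' + n'')) (F a b c))
    (fun a => ?_) a
  simp only [← L_X, ← Module.End.mul_apply, ← pow_add, ← add_assoc]
  exact h a b c

theorem L_sub (a : ℕ) (g g' : ℕ → ℕ → Bw) :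
    L a (fun n m => g n m - g' n m) = L a g - L a g' := by
  rw [eq_sub_iff_add_eq, ← L_add]
  simp

/-! ### Relations between the values of `𝔇` -/

theorem xTerm_zero (D : List ℕ → Bw) (n : ℕ) (l : List ℕ) : xTerm D n 0 l = (X ^ n) (D l) := by
  simp [xTerm]

theorem xTerm_one (D : List ℕ → Bw) (n : ℕ) (l : List ℕ) :
    xTerm D n 1 l = -(X ^ n) (X (D l)) := by
  simp [xTerm, pow_succ]

theorem xTerm_two (D : List ℕ → Bw) (n : ℕ) (l : List ℕ) :
    xTerm D n 2 l = (X ^ n) (X (X (D l))) := by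
  simp [xTerm, pow_succ]

theorem yTerm_zero (D : List ℕ → Bw) (n : ℕ) (l : List ℕ) :
    yTerm D (n + 2) 0 l = (X ^ n) (X (Y (D l))) := by
  simp [yTerm, pow_succ]

theorem yTerm_one (D : List ℕ → Bw) (n : ℕ) (l : List ℕ) :
    yTerm D (n + 2) 1 l = -(X ^ n) (X (X (Y (D l)))) := by
  simp [yTerm, pow_succ]

theorem yTerm_two (D : List ℕ → Bw) (n : ℕ) (l : List ℕ) :
    yTerm D (n + 2) 2 l = (X ^ n) (X (X (X (Y (D l))))) := by
  simp [yTerm, pow_succ]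

theorem yTerm_two' (D : List ℕ → Bw) (n : ℕ) (l : List ℕ) :
    yTerm D n 2 l = (X ^ n) (X (Y (D l))) := by
  simp [yTerm, pow_succ]

theorem DropD_P (m : ℕ) : DropD (Pl (m + 1)) = X (Y (DropD (Pl m))) := by
  refine sub_eq_zero.1 (vanish_one (F := fun m => DropD (Pl (m + 1)) - X (Y (DropD (Pl m))))
    (fun a => ?_) m)
  have h := DropD_rec 1 (rp (2 * a + 1) [])
  rw [show 1 :: rp (2 * a + 1) [] = Pl (a + 1) from rfl, SO_P, SE_P, SE_P, L_add, add_comm,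
    add_left_cancel_iff] at h
  simp only [xTerm_zero, yTerm_zero] at h
  simp only [map_sub, L_sub, h, sub_self]

theorem DropD_Q0 (b : ℕ) : DropD (Ql 0 b) = X (DropD (Pl (b + 1))) := by
  refine sub_eq_zero.1 (vanish_one (F := fun b => DropD (Ql 0 b) - X (DropD (Pl (b + 1))))
    (fun b => ?_) b)
  have h := DropD_rec 2 (rp (2 * b + 1) [])
  rw [show 2 :: rp (2 * b + 1) [] = Ql 0 b from rfl, SO_Q0, SE_Q0, SE_Q0, add_eq_right] at h
  simp only [xTerm_zero, xTerm_one, ← sub_eq_add_neg] at h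
  simpa only [map_sub] using h

theorem DropD_R0 (a : ℕ) : DropD (Rl a 0) = X (DropD (Pl (a + 1))) := by
  refine sub_eq_zero.1 (vanish_one (F := fun a => DropD (Rl a 0) - X (DropD (Pl (a + 1))))
    (fun a => ?_) a)
  have h := DropD_rec 1 (rp (2 * a) [2])
  rw [show 1 :: rp (2 * a) [2] = Rl a 0 from rfl, SO_R0, SE_R0, SE_R0, add_eq_right] at h
  simp only [xTerm_zero, xTerm_one, ← sub_eq_add_neg] at h
  simpa only [map_sub] using h

/-- Removes the terms `v` occurring on both sides of an instance of `DropD_rec`. -/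
theorem cancel_two {a b : ℕ} {u v w : ℕ → ℕ → ℕ → ℕ → Bw}
    (h : (L a fun n a => L b fun n' b => u n a n' b) + (L a fun n a => L b fun n' b => v n a n' b) =
      L a fun n a => L b fun n' b => v n a n' b + w n a n' b) :
    (L a fun n a => L b fun n' b => u n a n' b - w n a n' b) = 0 := by
  simp only [L_add] at h
  simp only [L_sub]
  rw [sub_eq_zero]
  exact add_right_cancel (h.trans (add_comm _ _))

theorem cancel_three {a b c : ℕ} {u v w : ℕ → ℕ → ℕ → ℕ → ℕ → ℕ → Bw}
    (h : (L a fun n a => L b fun n' b => L c fun n'' c => u n a n' b n'' c) +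
      (L a fun n a => L b fun n' b => L c fun n'' c => v n a n' b n'' c) =
      L a fun n a => L b fun n' b => L c fun n'' c => v n a n' b n'' c + w n a n' b n'' c) :
    (L a fun n a => L b fun n' b => L c fun n'' c => u n a n' b n'' c - w n a n' b n'' c) = 0 := by
  simp only [L_add] at h
  simp only [L_sub]
  rw [sub_eq_zero]
  exact add_right_cancel (h.trans (add_comm _ _))

theorem DropD_Q (a b : ℕ) : DropD (Ql (a + 1) b) = X (Y (DropD (Ql a b))) := by
  refine sub_eq_zero.1 (vanish_two
    (F := fun a b => DropD (Ql (a + 1) b) - X (Y (DropD (Ql a b)))) (fun a b => ?_) a b)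
  have h := DropD_rec 1 (rp (2 * a + 1) (2 :: rp (2 * b + 1) []))
  rw [show 1 :: rp (2 * a + 1) (2 :: rp (2 * b + 1) []) = Ql (a + 1) b from rfl, SO_Q, SE_Q, SE_Q]
    at h
  rw [← cancel_two h]
  refine congrArg (L a) (funext₂ fun n a => congrArg (L b) (funext₂ fun n' b => ?_))
  simp only [xTerm_zero, xTerm_one, yTerm_zero, yTerm_one, DropD_P (a + b + 1), map_sub]
  abel

theorem DropD_R (a b : ℕ) : DropD (Rl a (b + 1)) = X (Y (DropD (Rl a b))) := by
  refine sub_eq_zero.1 (vanish_two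
    (F := fun a b => DropD (Rl a (b + 1)) - X (Y (DropD (Rl a b)))) (fun a b => ?_) a b)
  have h := DropD_rec 1 (rp (2 * a) (2 :: rp (2 * (b + 1)) []))
  rw [show 1 :: rp (2 * a) (2 :: rp (2 * (b + 1)) []) = Rl a (b + 1) from rfl, SO_R, SE_R, SE_R]
    at h
  rw [← cancel_two h]
  refine congrArg (L a) (funext₂ fun n a => congrArg (L b) (funext₂ fun n' b => ?_))
  simp only [xTerm_zero, xTerm_one, yTerm_zero, yTerm_one, DropD_P (a + b + 1), map_sub]
  abel

/-- The two summands with `z₃` twice come from decreasing one of the two adjacent entries `2`; the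
last summand comes from decreasing both, which is allowed only in odd–even sums. -/
theorem DropD_S0 (a c : ℕ) : DropD (Sl a 0 c) =
    X (DropD (Ql (a + 1) c)) + X (DropD (Rl a (c + 1))) + X (Y (DropD (Pl (a + c + 2)))) := by
  refine sub_eq_zero.1 (vanish_two (F := fun a c => DropD (Sl a 0 c) -
    (X (DropD (Ql (a + 1) c)) + X (DropD (Rl a (c + 1))) + X (Y (DropD (Pl (a + c + 2))))))
    (fun a c => ?_) a c)
  have h := DropD_rec 1 (rp (2 * a) (2 :: 2 :: rp (2 * c + 1) []))
  rw [show 1 :: rp (2 * a) (2 :: 2 :: rp (2 * c + 1) []) = Sl a 0 c from rfl, SO_S0, SE_S0, SE_S0]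
    at h
  rw [← cancel_two h]
  refine congrArg (L a) (funext₂ fun n a => congrArg (L c) (funext₂ fun n' c => ?_))
  simp only [xTerm_zero, xTerm_one, yTerm_two', map_sub, map_add]
  abel

theorem DropD_S (a b c : ℕ) : DropD (Sl a (b + 1) c) = X (Y (DropD (Sl a b c))) := by
  refine sub_eq_zero.1 (vanish_three
    (F := fun a b c => DropD (Sl a (b + 1) c) - X (Y (DropD (Sl a b c)))) (fun a b c => ?_) a b c)
  have h := DropD_rec 1 (rp (2 * a) (2 :: rp (2 * (b + 1)) (2 :: rp (2 * c + 1) [])))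
  rw [show 1 :: rp (2 * a) (2 :: rp (2 * (b + 1)) (2 :: rp (2 * c + 1) [])) = Sl a (b + 1) c
    from rfl, SO_S, SE_S, SE_S] at h
  rw [← cancel_three h]
  refine congrArg (L a) (funext₂ fun n a => congrArg (L b) (funext₂ fun n' b =>
    congrArg (L c) (funext₂ fun n'' c => ?_)))
  simp only [xTerm_zero, xTerm_one, xTerm_two, yTerm_zero, yTerm_one, yTerm_two,
    DropD_P (a + b + c + 2), DropD_Q (a + b + 1), DropD_R a (b + c + 1), map_sub]
  abel

/-- The word `z_{k₁} ⋯ z_{k_r}`, written in the letters `x` and `y`. -/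
def W (l : List ℕ) : Bw := Finsupp.single (toXY l) 1

theorem X_Y_W (l : List ℕ) : X (Y (W l)) = W (2 :: l) := by
  simp [X, Y, W, toXY]

theorem X_X_Y_W (l : List ℕ) : X (X (Y (W l))) = W (3 :: l) := by
  simp [X, Y, W, toXY]

theorem DropD_P_eq (m : ℕ) : DropD (Pl m) = W (List.replicate m 2) := by
  induction m with
  | zero => simp [Pl, rp, DropD, Dfuel, W, toXY]
  | succ m ih => rw [DropD_P, ih, X_Y_W, List.replicate_succ]

theorem DropD_Q_eq (a b : ℕ) :
    DropD (Ql a b) = W (List.replicate a 2 ++ 3 :: List.replicate b 2) := by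
  induction a with
  | zero => rw [DropD_Q0, DropD_P, DropD_P_eq, X_X_Y_W]; rfl
  | succ a ih => rw [DropD_Q, ih, X_Y_W, List.replicate_succ, List.cons_append]

theorem DropD_R_eq (a b : ℕ) :
    DropD (Rl a b) = W (List.replicate b 2 ++ 3 :: List.replicate a 2) := by
  induction b with
  | zero => rw [DropD_R0, DropD_P, DropD_P_eq, X_X_Y_W]; rfl
  | succ b ih => rw [DropD_R, ih, X_Y_W, List.replicate_succ, List.cons_append]

theorem DropD_S_eq (a b c : ℕ) : DropD (Sl a b c) =
    W (List.replicate b 2 ++ 3 :: (List.replicate a 2 ++ 3 :: List.replicate c 2)) +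
    W (List.replicate b 2 ++ 3 :: (List.replicate c 2 ++ 3 :: List.replicate a 2)) +
    W (List.replicate (a + b + c + 3) 2) := by
  induction b with
  | zero =>
    rw [DropD_S0, DropD_Q, DropD_R, DropD_Q_eq, DropD_R_eq, DropD_P_eq, X_X_Y_W, X_X_Y_W, X_Y_W,
      ← List.replicate_succ]
    rfl
  | succ b ih =>
    rw [DropD_S, ih]
    simp only [map_add, X_Y_W]
    rw [← List.replicate_succ, show a + (b + 1) + c + 3 = a + b + c + 3 + 1 by ring]
    rfl

/-! ### Words in `z_k` and words in `x, y` -/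

theorem fromXYAux_replicate (k c : ℕ) (w : List Bool) :
    fromXYAux (List.replicate k false ++ true :: w) c = (c + k + 1) :: fromXYAux w 0 := by
  induction k generalizing c with
  | zero => rfl
  | succ k ih =>
    rw [List.replicate_succ, List.cons_append, fromXYAux, ih]
    congr 1
    omega

theorem fromXY_toXY (l : List ℕ) (h : ∀ k ∈ l, 1 ≤ k) : fromXY (toXY l) = l := by
  induction l with
  | nil => rfl
  | cons k l ih =>
    have h1 : toXY (k :: l) = List.replicate (k - 1) false ++ true :: toXY l := by simp [toXY]
    have h2 := ih fun k hk => h k (List.mem_cons_of_mem _ hk)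
    have h3 := h k List.mem_cons_self
    rw [fromXY] at h2
    rw [fromXY, h1, fromXYAux_replicate, h2]
    congr 1
    omega

theorem mapDomain_fromXY_W {l : List ℕ} (h : ∀ k ∈ l, 1 ≤ k) :
    Finsupp.mapDomain fromXY (W l) = zw l := by
  rw [W, Finsupp.mapDomain_single, fromXY_toXY l h, zw]

theorem rle_two {w : List Bool} (h : w.head? ≠ some true) :
    rle (false :: true :: w) = 1 :: 1 :: rle w := by
  rcases w with _ | ⟨_ | _, w⟩ <;> simp_all [rle]

theorem rle_three {w : List Bool} (h : w.head? ≠ some true) :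
    rle (false :: false :: true :: w) = 2 :: 1 :: rle w := by
  rcases w with _ | ⟨_ | _, w⟩ <;> simp_all [rle]

theorem rle_two_one {w : List Bool} (h : w.head? ≠ some true) :
    rle (false :: true :: true :: w) = 1 :: 2 :: rle w := by
  rcases w with _ | ⟨_ | _, w⟩ <;> simp_all [rle]

theorem head_toXY {l : List ℕ} (h : l.head? ≠ some 1 ∧ l.head? ≠ some 0) :
    (toXY l).head? ≠ some true := by
  rcases l with _ | ⟨_ | _ | k, l⟩
  · simp [toXY]
  · simp at h
  · simp at h
  · simp [toXY, List.replicate_succ]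

theorem head_toXY_replicate (n : ℕ) {l : List ℕ} (h : (toXY l).head? ≠ some true) :
    (toXY (List.replicate n 2 ++ l)).head? ≠ some true := by
  cases n
  · exact h
  · simp [toXY, List.replicate_succ]

theorem rle_toXY_replicate (n : ℕ) {l : List ℕ} (h : (toXY l).head? ≠ some true) :
    rle (toXY (List.replicate n 2 ++ l)) = rp (2 * n) (rle (toXY l)) := by
  induction n with
  | zero => rfl
  | succ n ih =>
    have h1 : toXY (List.replicate (n + 1) 2 ++ l) =
        false :: true :: toXY (List.replicate n 2 ++ l) := rfl
    rw [h1, rle_two (head_toXY_replicate n h), ih]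
    rfl

theorem rle_word (a b c : ℕ) :
    rle (toXY (List.replicate (a + 1) 2 ++ 1 ::
      (List.replicate b 2 ++ 3 :: List.replicate c 2))) = Sl a b c := by
  have hnil : (toXY []).head? ≠ some true := by simp [toXY]
  have hc : (toXY (List.replicate c 2)).head? ≠ some true := by
    simpa using head_toXY_replicate c hnil
  have h3 : (toXY (3 :: List.replicate c 2)).head? ≠ some true := by simp [toXY]
  have e3 : rle (toXY (3 :: List.replicate c 2)) = 2 :: rp (2 * c + 1) [] := by
    have h := rle_toXY_replicate c hnil
    rw [List.append_nil] at h
    refine (rle_three hc).trans ?_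
    rw [h]
    simp [toXY, rle, rp]
  have e1 : rle (toXY (2 :: 1 :: (List.replicate b 2 ++ 3 :: List.replicate c 2))) =
      1 :: 2 :: rp (2 * b) (2 :: rp (2 * c + 1) []) := by
    refine (rle_two_one (head_toXY_replicate b h3)).trans ?_
    rw [rle_toXY_replicate b h3, e3]
  rw [List.replicate_succ', List.append_assoc, List.singleton_append,
    rle_toXY_replicate a (by simp [toXY]), e1, rp_cons, Sl]

theorem Drop1_zw (l : List ℕ) : Drop1 (zw l) = Drop1W l := by
  rw [Drop1, zw, Finsupp.sum_single_index] <;> simp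

end SelectionSums

/-- for `2 ≤ j ≤ i ≤ r`,
`𝒟(z₂^{j−1} z₁ z₂^{i−j} z₃ z₂^{r−i}) = z₂^{i−j} z₃ z₂^{j−2} z₃ z₂^{r−i}
  + z₂^{i−j} z₃ z₂^{r−i} z₃ z₂^{j−2} + z₂^{r+1}`. -/
theorem stmt6 (r i j : ℕ) (h2j : 2 ≤ j) (hji : j ≤ i) (hir : i ≤ r) :
    Drop1 (zw (List.replicate (j - 1) 2 ++ 1 ::
        (List.replicate (i - j) 2 ++ 3 :: List.replicate (r - i) 2))) =
      zw (List.replicate (i - j) 2 ++ 3 ::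
        (List.replicate (j - 2) 2 ++ 3 :: List.replicate (r - i) 2)) +
      zw (List.replicate (i - j) 2 ++ 3 ::
        (List.replicate (r - i) 2 ++ 3 :: List.replicate (j - 2) 2)) +
      zw (List.replicate (r + 1) 2) := by
  obtain ⟨a, rfl⟩ := Nat.exists_eq_add_of_le' h2j
  obtain ⟨b, rfl⟩ := Nat.exists_eq_add_of_le hji
  obtain ⟨c, rfl⟩ := Nat.exists_eq_add_of_le hir
  have h1 : a + 2 + b - (a + 2) = b := by omega
  have h2 : a + 2 + b + c - (a + 2 + b) = c := by omega
  have h3 : a + 2 + b + c + 1 = a + b + c + 3 := by omega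
  rw [h1, h2, h3, Nat.add_sub_cancel, show a + 2 - 1 = a + 1 from rfl, Drop1_zw, Drop1W, rle_word,
    DropD_S_eq, Finsupp.mapDomain_add, Finsupp.mapDomain_add, mapDomain_fromXY_W,
    mapDomain_fromXY_W, mapDomain_fromXY_W]
  all_goals
    intro k hk
    simp only [List.mem_append, List.mem_cons, List.mem_replicate] at hk
    omega
end
end
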